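/- Let R : P₂ → ℝ be a bounded Lebesgue measurable function such that R(x,y) − R(x,z) + R(y,z) − R(x/z, y/z) − R((z−1)/(x−1), (z−1)/(y−1)) + R(x(z−1)/(z(x−1)), y(z−1)/(z(y−1))) = 0 for ALL (x,y,z) ∈ P₃ and R(1−y, (1−y)/(1−x)) = R(x,y) for ALL (x,y) ∈ P₂, and let C ∈ ℝ. Then there exists a bounded Lebesgue measurable function L : (0,1) → ℝ such that L(x) − L(y) − L(x/y) − L((y−1)/(x−1)) + L(x(y−1)/(y(x−1))) = R(x,y) for ALL (x,y) ∈ P₂ and L(1−x) = C − L(x) for ALL x ∈ (0,1). -/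

import Mathlib

open MeasureTheory Set

/-- The parameter space `P₂ = {(x,y) : 0 < x < y < 1}`. -/
def P2 : Set (ℝ × ℝ) := {p | 0 < p.1 ∧ p.1 < p.2 ∧ p.2 < 1}

/-!
Through cross ratios, `R` becomes a function on increasing 5-tuples of points of the line, and the
six-term equation says that it is a 4-cocycle, while `L` becomes a function on 4-tuples with
coboundary `spenceAbel L`. Averaging the cocycle over a vertex far to the right writes `R` as the
coboundary of its vertex average. Averaging the cocycle identity over a second vertex shows that the
vertex average is a `C²` function plus a function of the cross ratio alone, so `R` agrees with a
coboundary up to a `C²` solution of the six-term equation.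

The derivative of a `C²` solution along the logistic flow, which fixes `0` and `1`, becomes in the
gaps `(x, y - x, 1 - y)` a 3-cocycle of the additive semigroup `(0, ∞)`, homogeneous of degree one.
Such a cocycle is the coboundary of a homogeneous 2-cochain. Integrating back along the flow leaves
`R = spenceAbel L + θ (oddsRatio x y)`, as the odds ratio is constant on orbits. The symmetry of `R`
makes both `θ` and `L x + L (1 - x)` constant. The Rogers dilogarithm is odd under `x ↦ 1 - x` and
its coboundary is a nonzero constant, so together with a constant it adjusts both constants to the
prescribed values. Boundedness near `0` follows a posteriori from the doubling identity obtained at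
`y = 1 / (2 - x)`, and boundedness near `1` by reflection.
-/

namespace SpenceAbel

/-! ### Calculus on intervals -/

theorem continuousOn_intervalIntegral {X : Type*} [TopologicalSpace X]
    {f : X → ℝ → ℝ} {U : Set X} {a b : ℝ} (hab : a ≤ b)
    (hf : ContinuousOn (Function.uncurry f) (U ×ˢ Icc a b)) :
    ContinuousOn (fun x => ∫ t in a..b, f x t) U := by
  rw [continuousOn_iff_continuous_domRestrict]
  have hproj : Continuous (Function.uncurry fun (x : U) t => f x (projIcc a b hab t)) :=
    hf.comp_continuous (f := fun q : U × ℝ => ((q.1 : X), (projIcc a b hab q.2 : ℝ)))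
      ((continuous_subtype_val.comp continuous_fst).prodMk
        (continuous_subtype_val.comp (continuous_projIcc.comp continuous_snd)))
      fun q => ⟨q.1.2, (projIcc a b hab q.2).2⟩
  refine (intervalIntegral.continuous_parametric_intervalIntegral_of_continuous' hproj a b).congr
    fun x => intervalIntegral.integral_congr fun t ht => ?_
  rw [uIcc_of_le hab] at ht
  simp only [projIcc_of_mem hab ht]

theorem hasDerivAt_intervalIntegral_right {s : Set ℝ} (hs : IsOpen s) (hconn : s.OrdConnected)
    {f : ℝ → ℝ} (hf : ContinuousOn f s) {a b : ℝ} (ha : a ∈ s) (hb : b ∈ s) :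
    HasDerivAt (fun u => ∫ t in a..u, f t) (f b) b :=
  intervalIntegral.integral_hasDerivAt_right
    (hf.mono (hconn.uIcc_subset ha hb)).intervalIntegrable
    (hf.stronglyMeasurableAtFilter hs _ hb) (hf.continuousAt (hs.mem_nhds hb))

theorem eq_of_hasDerivAt_zero {s : Set ℝ} (hs : IsOpen s) (hconn : IsPreconnected s) {f : ℝ → ℝ}
    (hf : ∀ x ∈ s, HasDerivAt f 0 x) {a b : ℝ} (ha : a ∈ s) (hb : b ∈ s) : f a = f b :=
  hs.is_const_of_deriv_eq_zero hconn
    (fun x hx => (hf x hx).differentiableAt.differentiableWithinAt)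
    (fun x hx => (hf x hx).deriv) ha hb

/-! ### Cocycles of the additive semigroup of positive reals -/

/-- Inhomogeneous 2-cocycles of the semigroup `(0, ∞)`, with real coefficients. -/
def IsAddTwoCocycle (ζ : ℝ × ℝ → ℝ) : Prop :=
  ∀ p q r : ℝ, 0 < p → 0 < q → 0 < r → ζ (q, r) - ζ (p + q, r) + ζ (p, q + r) - ζ (p, q) = 0

theorem intervalIntegrable_of_continuousOn_Ioi {f : ℝ → ℝ} (hf : ContinuousOn f (Ioi 0))
    {a b : ℝ} (ha : 0 < a) (hb : 0 < b) : IntervalIntegrable f volume a b :=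
  (hf.mono (ordConnected_Ioi.uIcc_subset ha hb)).intervalIntegrable

section AddTwoCocycle

variable {ζ : ℝ × ℝ → ℝ}

theorem intervalIntegrable_slice_left (hcont : ContinuousOn ζ (Ioi 0 ×ˢ Ioi 0)) {r : ℝ}
    (hr : 0 < r) {a b : ℝ} (ha : 0 < a) (hb : 0 < b) :
    IntervalIntegrable (fun t => ζ (t, r)) volume a b :=
  intervalIntegrable_of_continuousOn_Ioi
    (hcont.comp (f := fun t => (t, r)) (by fun_prop) fun _ ht => ⟨ht, hr⟩) ha hb

theorem intervalIntegrable_slice_right (hcont : ContinuousOn ζ (Ioi 0 ×ˢ Ioi 0)) {p : ℝ}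
    (hp : 0 < p) {a b : ℝ} (ha : 0 < a) (hb : 0 < b) :
    IntervalIntegrable (fun t => ζ (p, t)) volume a b :=
  intervalIntegrable_of_continuousOn_Ioi
    (hcont.comp (f := fun t => (p, t)) (by fun_prop) fun _ ht => ⟨hp, ht⟩) ha hb

theorem IsAddTwoCocycle.integral_shift (hζ : IsAddTwoCocycle ζ)
    (hcont : ContinuousOn ζ (Ioi 0 ×ˢ Ioi 0)) {p q : ℝ} (hp : 0 < p) (hq : 0 < q) :
    (∫ t in (1 + q)..(2 + q), ζ (p, t)) = (∫ t in (1 : ℝ)..2, ζ (p, t)) +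
      (∫ t in (1 + p)..(1 + (p + q)), ζ (t, 1)) - ∫ t in (1 : ℝ)..(1 + q), ζ (t, 1) := by
  have hpos : 0 < 1 + q := by linarith
  have h_int {a b : ℝ} (ha : 0 < a) (hb : 0 < b) := intervalIntegrable_slice_right hcont hp ha hb
  have hcut : (∫ t in (1 + q)..(2 + q), ζ (p, t)) - ∫ t in (1 : ℝ)..2, ζ (p, t) =
      (∫ t in (2 : ℝ)..(2 + q), ζ (p, t)) - ∫ t in (1 : ℝ)..(1 + q), ζ (p, t) :=
    intervalIntegral.integral_interval_sub_interval_comm' (h_int hpos (by linarith))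
      (h_int one_pos two_pos) (h_int hpos one_pos)
  have hshift : (∫ t in (2 : ℝ)..(2 + q), ζ (p, t)) = ∫ t in (1 : ℝ)..(1 + q), ζ (p, t + 1) := by
    rw [intervalIntegral.integral_comp_add_right fun t => ζ (p, t)]; ring_nf
  have hcocycle : (∫ t in (1 : ℝ)..(1 + q), ζ (p, t + 1)) = ∫ t in (1 : ℝ)..(1 + q),
      (ζ (p, t) + ζ (p + t, 1) - ζ (t, 1)) := by
    refine intervalIntegral.integral_congr fun t ht => ?_
    have htpos : 0 < t := ordConnected_Ioi.uIcc_subset one_pos hpos ht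
    linarith [hζ p t 1 hp htpos one_pos]
  have h_int_shift : IntervalIntegrable (fun t => ζ (p + t, 1)) volume 1 (1 + q) :=
    intervalIntegrable_of_continuousOn_Ioi (hcont.comp (f := fun t => (p + t, 1)) (by fun_prop)
      fun t (ht : 0 < t) => ⟨add_pos hp ht, mem_Ioi.2 one_pos⟩) one_pos hpos
  rw [intervalIntegral.integral_sub ((h_int one_pos hpos).add h_int_shift)
      (intervalIntegrable_slice_left hcont one_pos one_pos hpos),
    intervalIntegral.integral_add (h_int one_pos hpos) h_int_shift,
    intervalIntegral.integral_comp_add_left fun t => ζ (t, 1),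
    show p + 1 = 1 + p by ring, show p + (1 + q) = 1 + (p + q) by ring] at hcocycle
  linarith

theorem IsAddTwoCocycle.exists_primitive (hζ : IsAddTwoCocycle ζ)
    (hcont : ContinuousOn ζ (Ioi 0 ×ˢ Ioi 0)) :
    ∃ e : ℝ → ℝ, ContinuousOn e (Ioi 0) ∧
      ∀ p q : ℝ, 0 < p → 0 < q → ζ (p, q) = e p + e q - e (p + q) := by
  refine ⟨fun p => (∫ t in (1 : ℝ)..2, ζ (p, t)) - ∫ t in (1 : ℝ)..(1 + p), ζ (t, 1), ?_, ?_⟩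
  · refine (continuousOn_intervalIntegral one_le_two (f := fun p t => ζ (p, t)) <| hcont.mono <|
      prod_mono_right fun t ht => one_pos.trans_le ht.1).sub fun p hp => ?_
    have hderiv := hasDerivAt_intervalIntegral_right isOpen_Ioi ordConnected_Ioi
      (hcont.comp (f := fun t => (t, 1)) (by fun_prop) fun t ht => ⟨ht, mem_Ioi.2 one_pos⟩)
      (mem_Ioi.2 one_pos) (mem_Ioi.2 (add_pos one_pos hp))
    exact (hderiv.comp_const_add 1 p).continuousAt.continuousWithinAt
  · intro p q hp hq
    have h_int {a : ℝ} (ha : 0 < a) := intervalIntegrable_slice_right hcont ha one_pos two_pos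
    have h_int_shift : IntervalIntegrable (fun r => ζ (p, q + r)) volume 1 2 :=
      intervalIntegrable_of_continuousOn_Ioi (hcont.comp (f := fun r => (p, q + r)) (by fun_prop)
        fun r (hr : 0 < r) => ⟨hp, add_pos hq hr⟩) one_pos two_pos
    have haverage : ∫ _ in (1 : ℝ)..2, ζ (p, q) =
        ∫ r in (1 : ℝ)..2, (ζ (q, r) - ζ (p + q, r) + ζ (p, q + r)) :=
      intervalIntegral.integral_congr fun r hr => by
        have hrpos : 0 < r := ordConnected_Ioi.uIcc_subset one_pos two_pos hr
        linarith [hζ p q r hp hq hrpos]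
    rw [intervalIntegral.integral_add ((h_int hq).sub (h_int (add_pos hp hq))) h_int_shift,
      intervalIntegral.integral_sub (h_int hq) (h_int (add_pos hp hq)),
      intervalIntegral.integral_comp_add_left fun t => ζ (p, t), add_comm q 1, add_comm q 2,
      hζ.integral_shift hcont hp hq] at haverage
    have hZ : (∫ t in (1 : ℝ)..(1 + (p + q)), ζ (t, 1)) - ∫ t in (1 : ℝ)..(1 + p), ζ (t, 1) =
        ∫ t in (1 + p)..(1 + (p + q)), ζ (t, 1) :=
      intervalIntegral.integral_interval_sub_left
        (intervalIntegrable_slice_left hcont one_pos one_pos (by linarith))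
        (intervalIntegrable_slice_left hcont one_pos one_pos (by linarith))
    norm_num at haverage
    linarith

end AddTwoCocycle

/-- The open positive octant of `ℝ³`. -/
def posOctant : Set (ℝ × ℝ × ℝ) := Ioi 0 ×ˢ Ioi 0 ×ˢ Ioi 0

theorem isOpen_posOctant : IsOpen posOctant := isOpen_Ioi.prod (isOpen_Ioi.prod isOpen_Ioi)

/-- Inhomogeneous 3-cocycles of the semigroup `(0, ∞)`, with real coefficients. -/
def IsAddThreeCocycle (T : ℝ × ℝ × ℝ → ℝ) : Prop :=
  ∀ a b c d : ℝ, 0 < a → 0 < b → 0 < c → 0 < d →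
    T (b, c, d) - T (a + b, c, d) + T (a, b + c, d) - T (a, b, c + d) + T (a, b, c) = 0

/-- The coboundary of a 2-cochain `φ` of the semigroup `(0, ∞)`. -/
def addCoboundary (φ : ℝ → ℝ → ℝ) (p : ℝ × ℝ × ℝ) : ℝ :=
  φ p.2.1 p.2.2 - φ (p.1 + p.2.1) p.2.2 + φ p.1 (p.2.1 + p.2.2) - φ p.1 p.2.1

/-- Positive homogeneity of degree `k` on the octant. -/
def IsOctantHomogeneous (k : ℕ) (T : ℝ × ℝ × ℝ → ℝ) : Prop :=
  ∀ l a b c : ℝ, 0 < l → 0 < a → 0 < b → 0 < c → T (l * a, l * b, l * c) = l ^ k * T (a, b, c)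

/-- The partial derivative in the first of three variables. -/
noncomputable def partialFst (T : ℝ × ℝ × ℝ → ℝ) (p : ℝ × ℝ × ℝ) : ℝ := fderiv ℝ T p (1, 0, 0)

section PartialFst

variable {T : ℝ × ℝ × ℝ → ℝ} {a b c : ℝ}

theorem hasDerivAt_partialFst (hT : DifferentiableAt ℝ T (a, b, c)) :
    HasDerivAt (fun t => T (t, b, c)) (partialFst T (a, b, c)) a :=
  hT.hasFDerivAt.comp_hasDerivAt a ((hasDerivAt_id a).prodMk (hasDerivAt_const a (b, c)))

theorem hasDerivAt_partialFst_of_contDiffOn (hT : ContDiffOn ℝ 1 T posOctant)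
    (ha : 0 < a) (hb : 0 < b) (hc : 0 < c) :
    HasDerivAt (fun t => T (t, b, c)) (partialFst T (a, b, c)) a :=
  have hmem : (a, b, c) ∈ posOctant := ⟨ha, hb, hc⟩
  hasDerivAt_partialFst <|
    (hT.contDiffAt (isOpen_posOctant.mem_nhds hmem)).differentiableAt one_ne_zero

theorem continuousOn_partialFst (hT : ContDiffOn ℝ 1 T posOctant) :
    ContinuousOn (partialFst T) posOctant :=
  (hT.continuousOn_fderiv_of_isOpen isOpen_posOctant le_rfl).clm_apply continuousOn_const

theorem IsOctantHomogeneous.partialFst {k : ℕ} (hhom : IsOctantHomogeneous (k + 1) T)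
    (hT : ContDiffOn ℝ 1 T posOctant) : IsOctantHomogeneous k (partialFst T) := by
  intro l a b c hl ha hb hc
  have hscaled : HasDerivAt (fun t => T (l * t, l * b, l * c))
      (SpenceAbel.partialFst T (l * a, l * b, l * c) * l) a :=
    (hasDerivAt_partialFst_of_contDiffOn hT (mul_pos hl ha) (mul_pos hl hb) (mul_pos hl hc)).comp a
      (by simpa using (hasDerivAt_id a).const_mul l)
  have hpulled := (hasDerivAt_partialFst_of_contDiffOn hT ha hb hc).const_mul (l ^ (k + 1))
  have heq := hscaled.unique <| hpulled.congr_of_eventuallyEq <| by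
    filter_upwards [Ioi_mem_nhds ha] with t ht using hhom l t b c hl ht hb hc
  refine mul_right_cancel₀ hl.ne' (heq.trans ?_)
  ring

theorem IsAddThreeCocycle.partialFst (hcoc : IsAddThreeCocycle T) (hT : ContDiffOn ℝ 1 T posOctant)
    {d : ℝ} (ha : 0 < a) (hb : 0 < b) (hc : 0 < c) (hd : 0 < d) :
    SpenceAbel.partialFst T (a + b, c, d) - SpenceAbel.partialFst T (a, b + c, d)
      + SpenceAbel.partialFst T (a, b, c + d) - SpenceAbel.partialFst T (a, b, c) = 0 := by
  have hderiv {b c : ℝ} (hb : 0 < b) (hc : 0 < c) :=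
    hasDerivAt_partialFst_of_contDiffOn hT ha hb hc
  have hsum := (((((hasDerivAt_partialFst_of_contDiffOn hT (add_pos ha hb) hc hd).comp_add_const
    a b).fun_sub (hderiv (add_pos hb hc) hd)).fun_add
    (hderiv hb (add_pos hc hd))).fun_sub (hderiv hb hc)).fun_sub (hasDerivAt_const a (T (b, c, d)))
  have hzero := hsum.congr_of_eventuallyEq (f₁ := fun _ => (0 : ℝ)) <| by
    filter_upwards [Ioi_mem_nhds ha] with t ht
    linarith [hcoc t b c d ht hb hc hd]
  linarith [hzero.unique (hasDerivAt_const a 0)]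

end PartialFst

theorem isAddTwoCocycle_exp {U : ℝ × ℝ × ℝ → ℝ} (hhom : IsOctantHomogeneous 0 U)
    (hU : ∀ a b c d : ℝ, 0 < a → 0 < b → 0 < c → 0 < d →
      U (a + b, c, d) - U (a, b + c, d) + U (a, b, c + d) - U (a, b, c) = 0) :
    IsAddTwoCocycle fun p => U (1, Real.exp p.1 - 1, Real.exp (p.1 + p.2) - Real.exp p.1) := by
  intro p q r hp hq hr
  have hexp_sub {s t : ℝ} (ht : 0 < t) : 0 < Real.exp (s + t) - Real.exp s :=
    sub_pos.2 <| Real.exp_lt_exp.2 <| lt_add_of_pos_right s ht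
  have hexp_sub_one {t : ℝ} (ht : 0 < t) : 0 < Real.exp t - 1 :=
    sub_pos.2 (Real.one_lt_exp_iff.2 ht)
  have hfour := hU 1 _ _ _ one_pos (hexp_sub_one hp) (hexp_sub (s := p) hq)
    (hexp_sub (s := p + q) hr)
  have hscale := hhom _ _ _ _ (Real.exp_pos p) one_pos (hexp_sub_one hq) (hexp_sub (s := q) hr)
  rw [pow_zero, one_mul, mul_sub, mul_sub, ← Real.exp_add, ← Real.exp_add, mul_one,
    ← add_assoc] at hscale
  simp only [← hscale, ← add_assoc]
  convert hfour using 6 <;> ring_nf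

theorem exists_ratio_primitive {U : ℝ × ℝ × ℝ → ℝ} (hcont : ContinuousOn U posOctant)
    (hhom : IsOctantHomogeneous 0 U)
    (hU : ∀ a b c d : ℝ, 0 < a → 0 < b → 0 < c → 0 < d →
      U (a + b, c, d) - U (a, b + c, d) + U (a, b, c + d) - U (a, b, c) = 0) :
    ∃ e : ℝ → ℝ, ContinuousOn e (Ioi 1) ∧ ∀ a b c : ℝ, 0 < a → 0 < b → 0 < c →
      U (a, b, c) = e ((a + b + c) / a) - e ((a + b) / a) - e ((a + b + c) / (a + b)) := by
  obtain ⟨e, he, hprim⟩ := (isAddTwoCocycle_exp hhom hU).exists_primitive <|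
    hcont.comp (by fun_prop) fun p hp => ⟨mem_Ioi.2 one_pos,
      sub_pos.2 (Real.one_lt_exp_iff.2 hp.1),
      sub_pos.2 (Real.exp_lt_exp.2 (lt_add_of_pos_right p.1 hp.2))⟩
  refine ⟨fun r => -e (Real.log r), ?_, fun a b c ha hb hc => ?_⟩
  · refine (he.comp (Real.continuousOn_log.mono fun r hr => ?_) fun r hr => Real.log_pos hr).neg
    exact (one_pos.trans hr).ne'
  have hlog : Real.log ((a + b) / a) + Real.log ((a + b + c) / (a + b))
      = Real.log ((a + b + c) / a) := by
    rw [← Real.log_mul (by positivity) (by positivity)]; congr 1; field_simp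
  have h := hprim (Real.log ((a + b) / a)) (Real.log ((a + b + c) / (a + b)))
    (Real.log_pos ((one_lt_div ha).2 (by linarith)))
    (Real.log_pos ((one_lt_div (by positivity)).2 (by linarith)))
  rw [hlog, Real.exp_log (by positivity), Real.exp_log (by positivity),
    show (a + b) / a - 1 = b / a by field_simp; ring,
    show (a + b + c) / a - (a + b) / a = c / a by field_simp; ring] at h
  have hscale := hhom a 1 (b / a) (c / a) ha one_pos (by positivity) (by positivity)
  rw [pow_zero, one_mul, mul_one, mul_div_cancel₀ _ ha.ne', mul_div_cancel₀ _ ha.ne'] at hscale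
  rw [hscale, h]
  ring

theorem addCoboundary_smul {φ : ℝ → ℝ → ℝ} {l : ℝ} (hφ : ∀ a b : ℝ, φ (l * a) (l * b) = l * φ a b)
    (a b c : ℝ) : addCoboundary φ (l * a, l * b, l * c) = l * addCoboundary φ (a, b, c) := by
  simp only [addCoboundary, ← mul_add, hφ]
  ring

theorem isAddThreeCocycle_addCoboundary (φ : ℝ → ℝ → ℝ) :
    IsAddThreeCocycle (addCoboundary φ) := by
  intro a b c d _ _ _ _
  simp only [addCoboundary, ← add_assoc]
  ring

theorem eq_mul_snd_of_homogeneous {W : ℝ → ℝ → ℝ}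
    (hhom : ∀ l b c : ℝ, 0 < l → 0 < b → 0 < c → W (l * b) (l * c) = l * W b c)
    (hW : ∀ b c d : ℝ, 0 < b → 0 < c → 0 < d → W b (c + d) = W (b + c) d + W b c)
    {b c : ℝ} (hb : 0 < b) (hc : 0 < c) : W b c = W 1 1 * c := by
  have htwist {c f : ℝ} (hc : 0 < c) (hf : 0 < f) :
      W 1 (c + (1 + c) * f) = (1 + c) * W 1 f + W 1 c := by
    rw [hW 1 c _ one_pos hc (by positivity), ← hhom _ _ _ (by positivity) one_pos hf, mul_one]
  have hlin {c : ℝ} (hc : 0 < c) : W 1 c = W 1 1 * c := by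
    have hcomm := (htwist hc one_pos).symm.trans
      ((congrArg (W 1) (by ring)).trans (htwist one_pos hc))
    linarith
  have hscale := hhom b 1 (c / b) hb one_pos (by positivity)
  rw [mul_one, mul_div_cancel₀ c hb.ne', hlin (by positivity)] at hscale
  rw [hscale]
  field_simp

/-- The function `φ`, homogeneous of degree one, with `φ 1 1 = 0` and
`∂φ/∂a = e ((a + b) / a)`. -/
noncomputable def homogeneousPrimitive (e : ℝ → ℝ) (a b : ℝ) : ℝ :=
  b * ∫ t in (1 : ℝ)..(a / b), e ((1 + t) / t)

section HomogeneousPrimitive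

variable {e : ℝ → ℝ}

theorem homogeneousPrimitive_smul (e : ℝ → ℝ) {l : ℝ} (hl : l ≠ 0) (a b : ℝ) :
    homogeneousPrimitive e (l * a) (l * b) = l * homogeneousPrimitive e a b := by
  simp only [homogeneousPrimitive, mul_div_mul_left _ _ hl, mul_assoc]

theorem hasDerivAt_integral_ratio (he : ContinuousOn e (Ioi 1)) {r : ℝ} (hr : 0 < r) :
    HasDerivAt (fun r => ∫ t in (1 : ℝ)..r, e ((1 + t) / t)) (e ((1 + r) / r)) r := by
  refine hasDerivAt_intervalIntegral_right (f := fun t => e ((1 + t) / t)) isOpen_Ioi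
    ordConnected_Ioi ?_ (mem_Ioi.2 one_pos) (mem_Ioi.2 hr)
  refine he.comp ((by fun_prop : ContinuousOn (fun t : ℝ => 1 + t) (Ioi 0)).div (by fun_prop)
    fun t ht => ne_of_gt ht) fun t (ht : 0 < t) => (one_lt_div ht).2 (by linarith)

theorem hasDerivAt_homogeneousPrimitive (he : ContinuousOn e (Ioi 1)) {a b : ℝ} (ha : 0 < a)
    (hb : 0 < b) : HasDerivAt (fun t => homogeneousPrimitive e t b) (e ((a + b) / a)) a := by
  have hderiv := ((hasDerivAt_integral_ratio he (div_pos ha hb)).comp a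
    ((hasDerivAt_id a).div_const b)).const_mul b
  refine hderiv.congr_deriv ?_
  rw [show (1 + a / b) / (a / b) = (a + b) / a by field_simp; ring]
  field_simp

theorem continuousOn_homogeneousPrimitive_simplex (he : ContinuousOn e (Ioi 1)) :
    ContinuousOn (fun t => homogeneousPrimitive e t (1 - t)) (Ioo 0 1) := by
  refine (by fun_prop : ContinuousOn (fun t : ℝ => 1 - t) _).mul fun t ht => ?_
  have hpos : 0 < 1 - t := sub_pos.2 ht.2
  exact ((hasDerivAt_integral_ratio he (div_pos ht.1 hpos)).continuousAt.comp
    (f := fun t => t / (1 - t))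
    (ContinuousAt.div (by fun_prop) (by fun_prop) hpos.ne')).continuousWithinAt

theorem hasDerivAt_addCoboundary_homogeneousPrimitive (he : ContinuousOn e (Ioi 1)) {a b c : ℝ}
    (ha : 0 < a) (hb : 0 < b) (hc : 0 < c) :
    HasDerivAt (fun t => addCoboundary (homogeneousPrimitive e) (t, b, c))
      (e ((a + b + c) / a) - e ((a + b) / a) - e ((a + b + c) / (a + b))) a := by
  have hderiv := (((hasDerivAt_const a (homogeneousPrimitive e b c)).fun_sub
    ((hasDerivAt_homogeneousPrimitive he (add_pos ha hb) hc).comp_add_const a b)).fun_add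
    (hasDerivAt_homogeneousPrimitive he ha (add_pos hb hc))).fun_sub
    (hasDerivAt_homogeneousPrimitive he ha hb)
  refine hderiv.congr_deriv ?_
  rw [← add_assoc]
  ring

end HomogeneousPrimitive

theorem IsAddThreeCocycle.eq_mul_thd_of_indep_fst {T : ℝ × ℝ × ℝ → ℝ} (hcoc : IsAddThreeCocycle T)
    (hhom : IsOctantHomogeneous 1 T)
    (hindep : ∀ a b c : ℝ, 0 < a → 0 < b → 0 < c → T (a, b, c) = T (1, b, c))
    {a b c : ℝ} (ha : 0 < a) (hb : 0 < b) (hc : 0 < c) : T (a, b, c) = T (1, 1, 1) * c := by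
  rw [hindep a b c ha hb hc]
  refine eq_mul_snd_of_homogeneous (W := fun b c => T (1, b, c)) ?_ ?_ hb hc
  · intro l b c hl hb hc
    have hscale := hhom l 1 b c hl one_pos hb hc
    rwa [mul_one, pow_one, hindep _ _ _ hl (mul_pos hl hb) (mul_pos hl hc)] at hscale
  · intro b c d hb hc hd
    have hfive := hcoc 1 b c d one_pos hb hc hd
    rw [hindep b c d hb hc hd, hindep (1 + b) c d (by positivity) hc hd] at hfive
    linarith

/-- Continuous 2-cochains of the semigroup `(0, ∞)` that are homogeneous of degree one;
continuity only needs to be required on the segment `a + b = 1`. -/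
structure IsHomogeneousCochain (φ : ℝ → ℝ → ℝ) : Prop where
  smul : ∀ l a b : ℝ, 0 < l → φ (l * a) (l * b) = l * φ a b
  continuousOn : ContinuousOn (fun t => φ t (1 - t)) (Ioo 0 1)

theorem IsAddThreeCocycle.exists_primitive {T : ℝ × ℝ × ℝ → ℝ} (hcoc : IsAddThreeCocycle T)
    (hhom : IsOctantHomogeneous 1 T) (hT : ContDiffOn ℝ 1 T posOctant) :
    ∃ φ : ℝ → ℝ → ℝ, IsHomogeneousCochain φ ∧
      ∀ a b c : ℝ, 0 < a → 0 < b → 0 < c → T (a, b, c) = addCoboundary φ (a, b, c) := by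
  obtain ⟨e, he, hU⟩ := exists_ratio_primitive (continuousOn_partialFst hT) (hhom.partialFst hT)
    fun a b c d ha hb hc hd => hcoc.partialFst hT ha hb hc hd
  set φ := homogeneousPrimitive e
  have hφ_smul (l a b : ℝ) (hl : 0 < l) : φ (l * a) (l * b) = l * φ a b :=
    homogeneousPrimitive_smul e hl.ne' a b
  set W : ℝ × ℝ × ℝ → ℝ := fun p => T p - addCoboundary φ p with hW
  have hW_coc : IsAddThreeCocycle W := fun a b c d ha hb hc hd => by
    linarith [hcoc a b c d ha hb hc hd, isAddThreeCocycle_addCoboundary φ a b c d ha hb hc hd]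
  have hW_hom : IsOctantHomogeneous 1 W := fun l a b c hl ha hb hc => by
    simp only [hW, hhom l a b c hl ha hb hc, addCoboundary_smul (hφ_smul l · · hl)]
    ring
  have hW_indep (a b c : ℝ) (ha : 0 < a) (hb : 0 < b) (hc : 0 < c) : W (a, b, c) = W (1, b, c) := by
    refine eq_of_hasDerivAt_zero isOpen_Ioi isPreconnected_Ioi (f := fun t => W (t, b, c))
      (fun t ht => ?_) (mem_Ioi.2 ha) (mem_Ioi.2 one_pos)
    refine ((hasDerivAt_partialFst_of_contDiffOn hT ht hb hc).fun_sub
      (hasDerivAt_addCoboundary_homogeneousPrimitive he ht hb hc)).congr_deriv ?_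
    rw [hU t b c ht hb hc, sub_self]
  refine ⟨fun a b => φ a b + W (1, 1, 1) * b, ⟨fun l a b hl => ?_,
    (continuousOn_homogeneousPrimitive_simplex he).add (by fun_prop)⟩, fun a b c ha hb hc => ?_⟩
  · rw [hφ_smul l a b hl]
    ring
  · have hlin := hW_coc.eq_mul_thd_of_indep_fst hW_hom hW_indep ha hb hc
    simp only [hW, addCoboundary] at hlin ⊢
    linarith

/-! ### The Spence–Abel operator and the six-term equation -/

/-- The quotient of the odds of `x` and of `y`, that is `(x / (1 - x)) / (y / (1 - y))`. -/
noncomputable def oddsRatio (x y : ℝ) : ℝ := x * (1 - y) / (y * (1 - x))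

/-- The five-term operator of the dilogarithm equation, as the alternating sum of the values of
`L` at the cross-ratios of the faces of `(∞, 0, x, y, 1)`. It agrees with the operator in the
Spence–Abel system for `L` with `L (1 - u) + L u` constant, up to that constant. -/
noncomputable def spenceAbel (L : ℝ → ℝ) (p : ℝ × ℝ) : ℝ :=
  L ((p.2 - p.1) / (1 - p.1)) - L p.2 + L p.1 - L (p.1 / p.2) + L (oddsRatio p.1 p.2)

/-- The six-term equation, the compatibility condition for `spenceAbel L = R`. -/
def IsSixTerm (R : ℝ × ℝ → ℝ) : Prop := ∀ x y z : ℝ, 0 < x → x < y → y < z → z < 1 →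
  R (x, y) - R (x, z) + R (y, z) - R (x / z, y / z) - R ((y - x) / (1 - x), (z - x) / (1 - x))
    + R (oddsRatio x z, oddsRatio y z) = 0

section PointsOfP2

variable {x y z : ℝ}

theorem isOpen_P2 : IsOpen P2 :=
  (isOpen_lt continuous_const continuous_fst).inter <|
    (isOpen_lt continuous_fst continuous_snd).inter (isOpen_lt continuous_snd continuous_const)

theorem sub_div_one_sub_mem_Ioo (hxy : x < y) (hy : y < 1) : (y - x) / (1 - x) ∈ Ioo 0 1 := by
  have hx : 0 < 1 - x := by linarith
  exact ⟨div_pos (sub_pos.2 hxy) hx, (div_lt_one hx).2 (by linarith)⟩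

theorem div_mem_Ioo (hx : 0 < x) (hxy : x < y) : x / y ∈ Ioo 0 1 :=
  ⟨div_pos hx (hx.trans hxy), (div_lt_one (hx.trans hxy)).2 hxy⟩

theorem oddsRatio_mem_Ioo (hx : 0 < x) (hxy : x < y) (hy : y < 1) : oddsRatio x y ∈ Ioo 0 1 := by
  have hpos : 0 < y * (1 - x) := mul_pos (hx.trans hxy) (by linarith)
  exact ⟨div_pos (mul_pos hx (by linarith)) hpos, (div_lt_one hpos).2 (by linarith)⟩

theorem div_mem_P2 (hx : 0 < x) (hxy : x < y) (hyz : y < z) : (x / z, y / z) ∈ P2 :=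
  have hz : 0 < z := by linarith
  ⟨div_pos hx hz, div_lt_div_of_pos_right hxy hz, (div_lt_one hz).2 hyz⟩

theorem sub_div_one_sub_mem_P2 (hxy : x < y) (hyz : y < z) (hz : z < 1) :
    ((y - x) / (1 - x), (z - x) / (1 - x)) ∈ P2 := by
  have hx : 0 < 1 - x := by linarith
  exact ⟨div_pos (by linarith) hx, div_lt_div_of_pos_right (by linarith) hx,
    (div_lt_one hx).2 (by linarith)⟩

theorem oddsRatio_mem_P2 (hx : 0 < x) (hxy : x < y) (hyz : y < z) (hz : z < 1) :
    (oddsRatio x z, oddsRatio y z) ∈ P2 := by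
  have hy : 0 < y := hx.trans hxy
  have hz0 : 0 < z := hy.trans hyz
  have hx1 : 0 < 1 - x := by linarith
  have hy1 : 0 < 1 - y := by linarith
  have hz1 : 0 < 1 - z := by linarith
  refine ⟨(oddsRatio_mem_Ioo hx (hxy.trans hyz) hz).1, ?_, (oddsRatio_mem_Ioo hy hyz hz).2⟩
  change x * (1 - z) / (z * (1 - x)) < y * (1 - z) / (z * (1 - y))
  have hdiff : 0 < z * (1 - z) * (y - x) := mul_pos (mul_pos hz0 hz1) (sub_pos.2 hxy)
  rw [div_lt_div_iff₀ (by positivity) (by positivity)]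
  linarith

end PointsOfP2

theorem isSixTerm_spenceAbel (L : ℝ → ℝ) : IsSixTerm (spenceAbel L) := by
  intro x y z hx hxy hyz hz
  have hy : 0 < y := hx.trans hxy
  have hz0 : 0 < z := hy.trans hyz
  have hx1 : 0 < 1 - x := by linarith
  have hy1 : 0 < 1 - y := by linarith
  have hz1 : 0 < 1 - z := by linarith
  have hzx : 0 < z - x := by linarith
  have hzy : 0 < z - y := by linarith
  have hyx : 0 < y - x := by linarith
  have one_sub_div (u : ℝ) : 1 - (u - x) / (1 - x) = (1 - u) / (1 - x) := by field_simp; ring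
  have one_sub_odds (u : ℝ) (hu : 0 < 1 - u) : 1 - oddsRatio u z = (z - u) / (z * (1 - u)) := by
    rw [oddsRatio]; field_simp; ring
  have face₁ : (y / z - x / z) / (1 - x / z) = (y - x) / (z - x) := by field_simp
  have face₂ : x / z / (y / z) = x / y := by field_simp
  have face₃ : oddsRatio (x / z) (y / z) = x * (z - y) / (y * (z - x)) := by
    rw [oddsRatio]; field_simp
  have face₄ : ((z - x) / (1 - x) - (y - x) / (1 - x)) / (1 - (y - x) / (1 - x))
      = (z - y) / (1 - y) := by rw [one_sub_div]; field_simp; ring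
  have face₅ : (y - x) / (1 - x) / ((z - x) / (1 - x)) = (y - x) / (z - x) := by field_simp
  have face₆ : oddsRatio ((y - x) / (1 - x)) ((z - x) / (1 - x))
      = (y - x) * (1 - z) / ((z - x) * (1 - y)) := by
    rw [oddsRatio, one_sub_div, one_sub_div]; field_simp
  have face₇ : (oddsRatio y z - oddsRatio x z) / (1 - oddsRatio x z)
      = (y - x) * (1 - z) / ((z - x) * (1 - y)) := by
    rw [one_sub_odds x hx1, oddsRatio, oddsRatio]; field_simp; ring
  have face₈ : oddsRatio x z / oddsRatio y z = oddsRatio x y := by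
    simp only [oddsRatio]; field_simp
  have face₉ : oddsRatio (oddsRatio x z) (oddsRatio y z) = x * (z - y) / (y * (z - x)) := by
    rw [oddsRatio, one_sub_odds x hx1, one_sub_odds y hy1, oddsRatio, oddsRatio]; field_simp
  simp only [spenceAbel, face₁, face₂, face₃, face₄, face₅, face₆, face₇, face₈, face₉]
  ring

theorem IsSixTerm.sub {R S : ℝ × ℝ → ℝ} (hR : IsSixTerm R) (hS : IsSixTerm S) :
    IsSixTerm fun p => R p - S p := fun x y z hx hxy hyz hz => by
  linarith [hR x y z hx hxy hyz hz, hS x y z hx hxy hyz hz]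

theorem differentiableAt_oddsRatio {p : ℝ × ℝ} (hp : p ∈ P2) :
    DifferentiableAt ℝ (fun p : ℝ × ℝ => oddsRatio p.1 p.2) p := by
  have hy : p.2 ≠ 0 := (hp.1.trans hp.2.1).ne'
  have hx : 1 - p.1 ≠ 0 := (sub_pos.2 (hp.2.1.trans hp.2.2)).ne'
  have hne : p.2 * (1 - p.1) ≠ 0 := mul_ne_zero hy hx
  unfold oddsRatio
  fun_prop (disch := exact hne)

theorem differentiableAt_spenceAbel {L : ℝ → ℝ}
    (hL : ∀ x ∈ Ioo (0 : ℝ) 1, DifferentiableAt ℝ L x) {p : ℝ × ℝ} (hp : p ∈ P2) :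
    DifferentiableAt ℝ (spenceAbel L) p := by
  obtain ⟨hx, hxy, hy⟩ := hp
  have hx1 : 1 - p.1 ≠ 0 := by linarith
  have hy0 : p.2 ≠ 0 := (hx.trans hxy).ne'
  have hcomp {f : ℝ × ℝ → ℝ} (hmem : f p ∈ Ioo 0 1) (hf : DifferentiableAt ℝ f p) :
      DifferentiableAt ℝ (fun q => L (f q)) p := (hL _ hmem).comp p hf
  exact ((((hcomp (sub_div_one_sub_mem_Ioo hxy hy)
      (by fun_prop (disch := exact hx1))).fun_sub
    (hcomp ⟨hx.trans hxy, hy⟩ differentiableAt_snd)).fun_add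
    (hcomp ⟨hx, hxy.trans hy⟩ differentiableAt_fst)).fun_sub
    (hcomp (div_mem_Ioo hx hxy) (by fun_prop (disch := exact hy0)))).fun_add
    (hcomp (oddsRatio_mem_Ioo hx hxy hy) (differentiableAt_oddsRatio ⟨hx, hxy, hy⟩))

/-! ### The logistic flow -/

/-- At time `t` the curve `X` moves with `κ` times the velocity of the logistic flow
`u' = u (1 - u)`, the flow of Möbius transformations fixing `0` and `1`. -/
def IsLogisticAt (κ : ℝ) (X : ℝ → ℝ) (t : ℝ) : Prop := HasDerivAt X (κ * (X t * (1 - X t))) t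

/-- The derivative along the diagonal logistic flow on the plane. -/
noncomputable def flowDeriv (R : ℝ × ℝ → ℝ) (p : ℝ × ℝ) : ℝ :=
  fderiv ℝ R p (p.1 * (1 - p.1), p.2 * (1 - p.2))

theorem isLogisticAt_sigmoid (s t : ℝ) : IsLogisticAt 1 (fun τ => Real.sigmoid (s + τ)) t := by
  simpa [IsLogisticAt] using (Real.hasDerivAt_sigmoid (s + t)).comp_const_add s t

namespace IsLogisticAt

variable {κ t : ℝ} {X Y : ℝ → ℝ}

theorem hasDerivAt_comp (hX : IsLogisticAt κ X t) (hY : IsLogisticAt κ Y t) {R : ℝ × ℝ → ℝ}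
    (hR : DifferentiableAt ℝ R (X t, Y t)) :
    HasDerivAt (fun τ => R (X τ, Y τ)) (κ * flowDeriv R (X t, Y t)) t := by
  refine (hR.hasFDerivAt.comp_hasDerivAt t (HasDerivAt.prodMk hX hY)).congr_deriv ?_
  exact (fderiv ℝ R (X t, Y t)).map_smul κ (X t * (1 - X t), Y t * (1 - Y t))

theorem div (hX : IsLogisticAt 1 X t) (hY : IsLogisticAt 1 Y t) (hYt : Y t ≠ 0) :
    IsLogisticAt (Y t) (fun τ => X τ / Y τ) t := by
  refine (HasDerivAt.fun_div hX hY hYt).congr_deriv ?_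
  field_simp
  ring

theorem sub_div_one_sub (hX : IsLogisticAt 1 X t) (hY : IsLogisticAt 1 Y t) (hXt : X t ≠ 1) :
    IsLogisticAt (1 - X t) (fun τ => (Y τ - X τ) / (1 - X τ)) t := by
  have hne : 1 - X t ≠ 0 := sub_ne_zero.2 hXt.symm
  refine ((HasDerivAt.fun_sub hY hX).fun_div (HasDerivAt.const_sub 1 hX) hne).congr_deriv ?_
  field_simp
  ring

theorem oddsRatio (hX : IsLogisticAt 1 X t) (hY : IsLogisticAt 1 Y t) (hXt : X t ≠ 1)
    (hYt : Y t ≠ 0) : IsLogisticAt 0 (fun τ => SpenceAbel.oddsRatio (X τ) (Y τ)) t := by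
  have hne : 1 - X t ≠ 0 := sub_ne_zero.2 hXt.symm
  refine ((HasDerivAt.fun_mul hX (HasDerivAt.const_sub 1 hY)).fun_div
    (HasDerivAt.fun_mul hY (HasDerivAt.const_sub 1 hX)) (mul_ne_zero hYt hne)).congr_deriv ?_
  field_simp
  ring

end IsLogisticAt

theorem contDiffOn_flowDeriv {R : ℝ × ℝ → ℝ} (hR : ContDiffOn ℝ 2 R P2) :
    ContDiffOn ℝ 1 (flowDeriv R) P2 :=
  (hR.fderiv_of_isOpen isOpen_P2 (by norm_num)).clm_apply (by fun_prop)

theorem exists_sigmoid_eq {x : ℝ} (hx : x ∈ Ioo 0 1) : ∃ s, Real.sigmoid s = x :=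
  (Set.ext_iff.1 Real.range_sigmoid x).2 hx

/-- The infinitesimal form of the six-term equation along the logistic flow. -/
def IsFiveTerm (S : ℝ × ℝ → ℝ) : Prop := ∀ x y z : ℝ, 0 < x → x < y → y < z → z < 1 →
  S (x, y) - S (x, z) + S (y, z) - z * S (x / z, y / z)
    - (1 - x) * S ((y - x) / (1 - x), (z - x) / (1 - x)) = 0

theorem IsSixTerm.flowDeriv {R : ℝ × ℝ → ℝ} (h6 : IsSixTerm R)
    (hR : ∀ p ∈ P2, DifferentiableAt ℝ R p) : IsFiveTerm (flowDeriv R) := by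
  intro x y z hx hxy hyz hz
  obtain ⟨s, rfl⟩ := exists_sigmoid_eq ⟨hx, by linarith⟩
  obtain ⟨t, rfl⟩ := exists_sigmoid_eq ⟨hx.trans hxy, hyz.trans hz⟩
  obtain ⟨u, rfl⟩ := exists_sigmoid_eq ⟨by linarith, hz⟩
  have hX := isLogisticAt_sigmoid s 0
  have hY := isLogisticAt_sigmoid t 0
  have hZ := isLogisticAt_sigmoid u 0
  have hne_zero (a : ℝ) : Real.sigmoid a ≠ 0 := (Real.sigmoid_pos a).ne'
  have hne_one (a : ℝ) : Real.sigmoid a ≠ 1 := (Real.sigmoid_lt_one a).ne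
  have hsum := (((((hX.hasDerivAt_comp hY (R := R) ?_).fun_sub
    (hX.hasDerivAt_comp hZ (R := R) ?_)).fun_add (hY.hasDerivAt_comp hZ (R := R) ?_)).fun_sub
    ((hX.div hZ (hne_zero _)).hasDerivAt_comp (hY.div hZ (hne_zero _)) (R := R) ?_)).fun_sub
    ((hX.sub_div_one_sub hY (hne_one _)).hasDerivAt_comp
      (hX.sub_div_one_sub hZ (hne_one _)) (R := R) ?_)).fun_add
    ((hX.oddsRatio hZ (hne_one _) (hne_zero _)).hasDerivAt_comp
      (hY.oddsRatio hZ (hne_one _) (hne_zero _)) (R := R) ?_)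
  · have hzero := hsum.congr_of_eventuallyEq (f₁ := fun _ => (0 : ℝ)) <| .of_forall fun τ =>
      (h6 _ _ _ (Real.sigmoid_pos _) (Real.sigmoid_lt (by simpa using Real.sigmoid_lt_iff.1 hxy))
        (Real.sigmoid_lt (by simpa using Real.sigmoid_lt_iff.1 hyz)) (Real.sigmoid_lt_one _)).symm
    have heq := hzero.unique (hasDerivAt_const 0 0)
    simp only [add_zero, one_mul, zero_mul] at heq
    exact heq
  all_goals rw [add_zero, add_zero]; try rw [add_zero]
  all_goals refine hR _ ?_
  exacts [⟨hx, hxy, hyz.trans hz⟩, ⟨hx, hxy.trans hyz, hz⟩, ⟨hx.trans hxy, hyz, hz⟩,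
    div_mem_P2 hx hxy hyz, sub_div_one_sub_mem_P2 hxy hyz hz, oddsRatio_mem_P2 hx hxy hyz hz]

theorem oddsRatio_sigmoid (s t : ℝ) :
    oddsRatio (Real.sigmoid s) (Real.sigmoid t) = Real.exp (s - t) := by
  rw [oddsRatio, ← Real.sigmoid_neg, ← Real.sigmoid_neg, ← Real.sigmoid_mul_rexp_neg,
    ← Real.sigmoid_mul_rexp_neg, Real.exp_sub, Real.exp_neg, Real.exp_neg]
  have hs := (Real.sigmoid_pos s).ne'
  have ht := (Real.sigmoid_pos t).ne'
  field_simp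

theorem eq_of_flowDeriv_eq_zero {F : ℝ × ℝ → ℝ} (hF : ∀ p ∈ P2, DifferentiableAt ℝ F p)
    (hflow : ∀ p ∈ P2, flowDeriv F p = 0) {x y : ℝ} (hx : 0 < x) (hxy : x < y) (hy : y < 1) :
    F (x, y) = F (oddsRatio x y / (1 + oddsRatio x y), 1 / 2) := by
  obtain ⟨s, rfl⟩ := exists_sigmoid_eq ⟨hx, hxy.trans hy⟩
  obtain ⟨t, rfl⟩ := exists_sigmoid_eq ⟨hx.trans hxy, hy⟩
  have hmem (τ : ℝ) : (Real.sigmoid (s + τ), Real.sigmoid (t + τ)) ∈ P2 :=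
    ⟨Real.sigmoid_pos _, Real.sigmoid_lt (by simpa using Real.sigmoid_lt_iff.1 hxy),
      Real.sigmoid_lt_one _⟩
  have hderiv (τ : ℝ) :
      HasDerivAt (fun τ => F (Real.sigmoid (s + τ), Real.sigmoid (t + τ))) 0 τ :=
    ((isLogisticAt_sigmoid s τ).hasDerivAt_comp (isLogisticAt_sigmoid t τ)
      (hF _ (hmem τ))).congr_deriv (by rw [hflow _ (hmem τ), mul_zero])
  have hconst := eq_of_hasDerivAt_zero isOpen_univ isPreconnected_univ (fun τ _ => hderiv τ)
    (mem_univ 0) (mem_univ (-t))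
  simp only [add_zero, add_neg_cancel, Real.sigmoid_zero, ← sub_eq_add_neg] at hconst
  rw [hconst, oddsRatio_sigmoid, Real.sigmoid_def (s - t), Real.exp_neg, one_div]
  congr 2
  field_simp
  ring

/-! ### Smooth solutions of the six-term equation -/

/-- The extension of a function of `(x, y)` to the octant, homogeneous of degree one in the
gaps `(a, b, c) = (x, y - x, 1 - y)`. -/
noncomputable def homogenize (S : ℝ × ℝ → ℝ) (p : ℝ × ℝ × ℝ) : ℝ :=
  (p.1 + p.2.1 + p.2.2) * S (p.1 / (p.1 + p.2.1 + p.2.2), (p.1 + p.2.1) / (p.1 + p.2.1 + p.2.2))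

section Homogenize

variable {S : ℝ × ℝ → ℝ}

theorem homogenize_gaps (S : ℝ × ℝ → ℝ) (x y : ℝ) :
    homogenize S (x, y - x, 1 - y) = S (x, y) := by
  simp [homogenize]

theorem isOctantHomogeneous_homogenize (S : ℝ × ℝ → ℝ) :
    IsOctantHomogeneous 1 (homogenize S) := by
  intro l a b c hl _ _ _
  simp only [homogenize, ← mul_add, mul_div_mul_left _ _ hl.ne', pow_one, mul_assoc]

theorem contDiffOn_homogenize (hS : ContDiffOn ℝ 1 S P2) :
    ContDiffOn ℝ 1 (homogenize S) posOctant := by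
  have hne : ∀ p ∈ posOctant, p.1 + p.2.1 + p.2.2 ≠ 0 := fun p hp =>
    (add_pos (add_pos hp.1 hp.2.1) hp.2.2).ne'
  refine ContDiffOn.mul (by fun_prop) (hS.comp (f := fun p : ℝ × ℝ × ℝ =>
    (p.1 / (p.1 + p.2.1 + p.2.2), (p.1 + p.2.1) / (p.1 + p.2.1 + p.2.2)))
    ((ContDiffOn.div (by fun_prop) (by fun_prop) hne).prodMk
      (ContDiffOn.div (by fun_prop) (by fun_prop) hne)) fun p hp => ?_)
  exact div_mem_P2 hp.1 (lt_add_of_pos_right _ hp.2.1) (lt_add_of_pos_right _ hp.2.2)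

theorem IsFiveTerm.isAddThreeCocycle_homogenize (hS : IsFiveTerm S) :
    IsAddThreeCocycle (homogenize S) := by
  intro a b c d ha hb hc hd
  set n := a + b + c + d with hn
  have hpos : 0 < n := by positivity
  have hfive := hS (a / n) ((a + b) / n) ((a + b + c) / n) (by positivity)
    (div_lt_div_of_pos_right (by linarith) hpos) (div_lt_div_of_pos_right (by linarith) hpos)
    ((div_lt_one hpos).2 (by linarith))
  have hcompl : 1 - a / n = (b + c + d) / n := by field_simp; linarith
  rw [div_div_div_cancel_right₀ hpos.ne', div_div_div_cancel_right₀ hpos.ne', hcompl, ← sub_div,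
    ← sub_div, div_div_div_cancel_right₀ hpos.ne', div_div_div_cancel_right₀ hpos.ne',
    show a + b - a = b by ring, show a + b + c - a = b + c by ring] at hfive
  have hscaled := congrArg (n * ·) hfive
  simp only [homogenize, ← add_assoc, ← hn]
  simp only [mul_add, mul_sub, ← mul_assoc, mul_div_cancel₀ _ hpos.ne', mul_zero] at hscaled
  linarith

theorem IsFiveTerm.exists_primitive (h5 : IsFiveTerm S) (hS : ContDiffOn ℝ 1 S P2) :
    ∃ φ : ℝ → ℝ → ℝ, IsHomogeneousCochain φ ∧
      ∀ p ∈ P2, S p = addCoboundary φ (p.1, p.2 - p.1, 1 - p.2) := by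
  obtain ⟨φ, hφ, hprim⟩ := h5.isAddThreeCocycle_homogenize.exists_primitive
    (isOctantHomogeneous_homogenize S) (contDiffOn_homogenize hS)
  refine ⟨φ, hφ, fun p ⟨hx, hxy, hy⟩ => ?_⟩
  rw [← hprim _ _ _ hx (sub_pos.2 hxy) (sub_pos.2 hy), homogenize_gaps]

end Homogenize

/-- The primitive of `φ t (1 - t) / (t (1 - t))`: its derivative along the logistic flow is the
restriction of `φ` to the segment `a + b = 1`. -/
noncomputable def logisticPrimitive (φ : ℝ → ℝ → ℝ) (x : ℝ) : ℝ :=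
  ∫ t in (1 / 2 : ℝ)..x, φ t (1 - t) / (t * (1 - t))

namespace IsHomogeneousCochain

variable {φ : ℝ → ℝ → ℝ}

theorem hasDerivAt_logisticPrimitive (hφ : IsHomogeneousCochain φ) {x : ℝ} (hx : x ∈ Ioo 0 1) :
    HasDerivAt (logisticPrimitive φ) (φ x (1 - x) / (x * (1 - x))) x :=
  hasDerivAt_intervalIntegral_right isOpen_Ioo ordConnected_Ioo
    (hφ.continuousOn.div (by fun_prop) fun _ ht => mul_ne_zero ht.1.ne' (sub_pos.2 ht.2).ne')
    (by norm_num) hx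

theorem hasDerivAt_logisticPrimitive_comp (hφ : IsHomogeneousCochain φ) {X : ℝ → ℝ} {κ t : ℝ}
    (hκ : 0 < κ) (hX : IsLogisticAt κ X t) (hXt : X t ∈ Ioo 0 1) :
    HasDerivAt (fun τ => logisticPrimitive φ (X τ)) (φ (κ * X t) (κ * (1 - X t))) t := by
  refine ((hφ.hasDerivAt_logisticPrimitive hXt).comp t hX).congr_deriv ?_
  have hx : X t ≠ 0 := hXt.1.ne'
  have hx1 : 1 - X t ≠ 0 := (sub_pos.2 hXt.2).ne'
  rw [hφ.smul _ _ _ hκ]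
  field_simp

theorem flowDeriv_spenceAbel_logisticPrimitive (hφ : IsHomogeneousCochain φ) {x y : ℝ}
    (hx : 0 < x) (hxy : x < y) (hy : y < 1) :
    flowDeriv (spenceAbel (logisticPrimitive φ)) (x, y) = addCoboundary φ (x, y - x, 1 - y) := by
  obtain ⟨s, rfl⟩ := exists_sigmoid_eq ⟨hx, hxy.trans hy⟩
  obtain ⟨t, rfl⟩ := exists_sigmoid_eq ⟨hx.trans hxy, hy⟩
  have hX := isLogisticAt_sigmoid s 0
  have hY := isLogisticAt_sigmoid t 0
  have hne_zero : Real.sigmoid (t + 0) ≠ 0 := (Real.sigmoid_pos _).ne'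
  have hne_one : Real.sigmoid (s + 0) ≠ 1 := (Real.sigmoid_lt_one _).ne
  have hdiff := fun x hx => (hφ.hasDerivAt_logisticPrimitive (x := x) hx).differentiableAt
  have hflow := hX.hasDerivAt_comp hY (R := spenceAbel (logisticPrimitive φ)) <|
    differentiableAt_spenceAbel hdiff (by simpa using ⟨hx, hxy, hy⟩)
  have hsum := ((((hφ.hasDerivAt_logisticPrimitive_comp ?_ (hX.sub_div_one_sub hY hne_one)
      ?_).fun_sub (hφ.hasDerivAt_logisticPrimitive_comp one_pos hY ?_)).fun_add
    (hφ.hasDerivAt_logisticPrimitive_comp one_pos hX ?_)).fun_sub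
    (hφ.hasDerivAt_logisticPrimitive_comp ?_ (hX.div hY hne_zero) ?_)).fun_add
    (HasDerivAt.comp (h₂ := logisticPrimitive φ) 0 (hφ.hasDerivAt_logisticPrimitive ?_)
      (hX.oddsRatio hY hne_one hne_zero))
  · have heq := hflow.unique hsum
    simp only [add_zero, zero_mul, mul_zero, one_mul] at heq hne_zero hne_one
    rw [heq, addCoboundary, mul_sub, mul_sub, mul_div_cancel₀ _ hne_zero,
      mul_div_cancel₀ _ (sub_ne_zero.2 hne_one.symm)]
    ring_nf
  all_goals simp only [add_zero]
  exacts [by linarith, sub_div_one_sub_mem_Ioo hxy hy, ⟨hx.trans hxy, hy⟩, ⟨hx, hxy.trans hy⟩,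
    hx.trans hxy, div_mem_Ioo hx hxy, oddsRatio_mem_Ioo hx hxy hy]

end IsHomogeneousCochain

theorem exists_eq_spenceAbel_add_oddsRatio {R : ℝ × ℝ → ℝ} (hR : ContDiffOn ℝ 2 R P2)
    (h6 : IsSixTerm R) :
    ∃ L θ : ℝ → ℝ, (∀ x ∈ Ioo (0 : ℝ) 1, DifferentiableAt ℝ L x) ∧
      ∀ p ∈ P2, R p = spenceAbel L p + θ (oddsRatio p.1 p.2) := by
  have hRdiff : ∀ p ∈ P2, DifferentiableAt ℝ R p := fun p hp =>
    (hR.contDiffAt (isOpen_P2.mem_nhds hp)).differentiableAt two_ne_zero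
  obtain ⟨φ, hφ, hprim⟩ := (h6.flowDeriv hRdiff).exists_primitive (contDiffOn_flowDeriv hR)
  have hL := fun x hx => (hφ.hasDerivAt_logisticPrimitive (x := x) hx).differentiableAt
  set F : ℝ × ℝ → ℝ := fun p => R p - spenceAbel (logisticPrimitive φ) p with hF
  have hFdiff : ∀ p ∈ P2, DifferentiableAt ℝ F p := fun p hp =>
    (hRdiff p hp).fun_sub (differentiableAt_spenceAbel hL hp)
  have hflow : ∀ p ∈ P2, flowDeriv F p = 0 := fun p hp => by
    rw [flowDeriv, hF, fderiv_fun_sub (hRdiff p hp) (differentiableAt_spenceAbel hL hp)]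
    exact sub_eq_zero.2 <| (hprim p hp).trans
      (hφ.flowDeriv_spenceAbel_logisticPrimitive hp.1 hp.2.1 hp.2.2).symm
  refine ⟨logisticPrimitive φ, fun u => F (u / (1 + u), 1 / 2), hL, fun p ⟨hx, hxy, hy⟩ => ?_⟩
  linarith [eq_of_flowDeriv_eq_zero hFdiff hflow hx hxy hy]

/-! ### The rotation symmetry -/

/-- The action on `P2` of the cyclic shift of the five points `∞, 0, x, y, 1` of the projective
line. -/
noncomputable def rotate (p : ℝ × ℝ) : ℝ × ℝ := (1 - p.2, (1 - p.2) / (1 - p.1))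

theorem rotate_mem_P2 {p : ℝ × ℝ} (hp : p ∈ P2) : rotate p ∈ P2 := by
  obtain ⟨hx, hxy, hy⟩ := hp
  have hx1 : 0 < 1 - p.1 := by linarith
  have hy1 : 0 < 1 - p.2 := by linarith
  exact ⟨hy1, (lt_div_iff₀ hx1).2 (mul_lt_of_lt_one_right hy1 (by linarith)),
    (div_lt_one hx1).2 (by linarith)⟩

section RotateCoordinates

variable {p : ℝ × ℝ}

theorem oddsRatio_rotate (hp : p ∈ P2) :
    oddsRatio (rotate p).1 (rotate p).2 = 1 - p.1 / p.2 := by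
  obtain ⟨hx, hxy, hy⟩ := hp
  have hy0 : p.2 ≠ 0 := by linarith
  have hx1 : 1 - p.1 ≠ 0 := by linarith
  have hy1 : 1 - p.2 ≠ 0 := by linarith
  simp only [oddsRatio, rotate, sub_sub_cancel]
  field_simp
  ring

theorem sub_div_one_sub_rotate (hp : p ∈ P2) :
    ((rotate p).2 - (rotate p).1) / (1 - (rotate p).1) = oddsRatio p.1 p.2 := by
  obtain ⟨hx, hxy, hy⟩ := hp
  have hy0 : p.2 ≠ 0 := by linarith
  have hx1 : 1 - p.1 ≠ 0 := by linarith
  simp only [oddsRatio, rotate, sub_sub_cancel]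
  field_simp
  ring

theorem rotate_fst_div_snd (hp : p ∈ P2) : (rotate p).1 / (rotate p).2 = 1 - p.1 :=
  div_div_cancel₀ (sub_pos.2 hp.2.2).ne'

theorem rotate_snd (hp : p ∈ P2) : (rotate p).2 = 1 - (p.2 - p.1) / (1 - p.1) := by
  have hx1 : 1 - p.1 ≠ 0 := by linarith [hp.2.1, hp.2.2]
  simp only [rotate]
  field_simp
  ring

end RotateCoordinates

theorem spenceAbel_rotate (L : ℝ → ℝ) {p : ℝ × ℝ} (hp : p ∈ P2) :
    spenceAbel L (rotate p) = L (oddsRatio p.1 p.2) - L (1 - (p.2 - p.1) / (1 - p.1))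
      + L (1 - p.2) - L (1 - p.1) + L (1 - p.1 / p.2) := by
  rw [spenceAbel, sub_div_one_sub_rotate hp, oddsRatio_rotate hp, rotate_fst_div_snd hp,
    rotate_snd hp, rotate]

theorem spenceAbel_rotate_of_antisymm {L : ℝ → ℝ} (hL : ∀ x, L (1 - x) = -L x) {p : ℝ × ℝ}
    (hp : p ∈ P2) : spenceAbel L (rotate p) = spenceAbel L p := by
  rw [spenceAbel_rotate L hp, spenceAbel]
  simp only [hL]
  ring

theorem eq_of_two_mul_map_mul {M : Type*} [CommSemigroup M] {S : Set M} {f : M → ℝ}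
    (hS : ∀ r ∈ S, ∀ s ∈ S, r * s ∈ S) (hf : ∀ r ∈ S, ∀ s ∈ S, 2 * f (r * s) = f r + f s)
    {r s : M} (hr : r ∈ S) (hs : s ∈ S) : f r = f s := by
  -- Expand `f (r * r * s)` in the two possible orders.
  have hleft := hf (r * r) (hS r hr r hr) s hs
  have hright := hf r hr (r * s) (hS r hr s hs)
  rw [← mul_assoc] at hright
  linarith [hf r hr r hr, hf r hr s hs]

section RotationInvariant

variable {R : ℝ × ℝ → ℝ} {L θ : ℝ → ℝ}

theorem reflection_defect_of_rotate_eq (hrot : ∀ p ∈ P2, R (rotate p) = R p)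
    (hR : ∀ p ∈ P2, R p = spenceAbel L p + θ (oddsRatio p.1 p.2)) {p : ℝ × ℝ} (hp : p ∈ P2) :
    (L p.2 + L (1 - p.2)) - (L ((p.2 - p.1) / (1 - p.1)) + L (1 - (p.2 - p.1) / (1 - p.1)))
      - (L p.1 + L (1 - p.1)) + (L (p.1 / p.2) + L (1 - p.1 / p.2))
      = θ (oddsRatio p.1 p.2) - θ (1 - p.1 / p.2) := by
  have hinv := hrot p hp
  rw [hR p hp, hR _ (rotate_mem_P2 hp), oddsRatio_rotate hp, spenceAbel_rotate L hp,
    spenceAbel] at hinv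
  linarith

theorem reflection_add_eq_of_rotate_eq (hrot : ∀ p ∈ P2, R (rotate p) = R p)
    (hR : ∀ p ∈ P2, R p = spenceAbel L p + θ (oddsRatio p.1 p.2)) {r s : ℝ} (hr : r ∈ Ioo 0 1)
    (hs : s ∈ Ioo 0 1) :
    L s + L (1 - s) + θ (1 - s) = L (r * s) + L (1 - r * s) + θ (1 - r) := by
  obtain ⟨hr0, hr1⟩ := hr
  obtain ⟨hs0, hs1⟩ := hs
  have hrs : r * s < r := mul_lt_of_lt_one_right hr0 hs1
  have hrs0 : 0 < r * s := mul_pos hr0 hs0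
  have hrs1 : 0 < 1 - r * s := by linarith
  set p : ℝ × ℝ := (1 - r, (1 - r) / (1 - r * s)) with hp
  have hpmem : p ∈ P2 := ⟨sub_pos.2 hr1,
    (lt_div_iff₀ hrs1).2 (mul_lt_of_lt_one_right (by linarith) (by linarith)),
    (div_lt_one hrs1).2 (by linarith)⟩
  have hdiv : p.1 / p.2 = 1 - r * s := div_div_cancel₀ (sub_pos.2 hr1).ne'
  have hodds : oddsRatio p.1 p.2 = 1 - s := by
    have hr1' : 1 - r ≠ 0 := by linarith
    simp only [oddsRatio, hp, sub_sub_cancel]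
    field_simp
    ring
  have hdefect := reflection_defect_of_rotate_eq hrot hR hpmem
  have hdefect_rotate := reflection_defect_of_rotate_eq hrot hR (rotate_mem_P2 hpmem)
  rw [sub_div_one_sub_rotate hpmem, oddsRatio_rotate hpmem, rotate_fst_div_snd hpmem,
    rotate_snd hpmem, hdiv, hodds] at hdefect_rotate
  rw [hdiv, hodds] at hdefect
  simp only [rotate, hp, sub_sub_cancel] at hdefect hdefect_rotate
  linarith

theorem exists_const_of_rotate_eq (hrot : ∀ p ∈ P2, R (rotate p) = R p)
    (hR : ∀ p ∈ P2, R p = spenceAbel L p + θ (oddsRatio p.1 p.2)) :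
    ∃ k t : ℝ, (∀ x ∈ Ioo (0 : ℝ) 1, L x + L (1 - x) = k) ∧ ∀ x ∈ Ioo (0 : ℝ) 1, θ x = t := by
  have hadd {r s : ℝ} (hr : r ∈ Ioo 0 1) (hs : s ∈ Ioo 0 1) :=
    reflection_add_eq_of_rotate_eq hrot hR hr hs
  have hmul {r s : ℝ} (hr : r ∈ Ioo (0 : ℝ) 1) (hs : s ∈ Ioo (0 : ℝ) 1) : r * s ∈ Ioo (0 : ℝ) 1 :=
    ⟨mul_pos hr.1 hs.1, mul_lt_one_of_nonneg_of_lt_one_left hr.1.le hr.2 hs.2.le⟩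
  have hswap {r s : ℝ} (hr : r ∈ Ioo (0 : ℝ) 1) (hs : s ∈ Ioo (0 : ℝ) 1) :
      L r + L (1 - r) + 2 * θ (1 - r) = L s + L (1 - s) + 2 * θ (1 - s) := by
    have hcomm := hadd hs hr
    rw [mul_comm] at hcomm
    linarith [hadd hr hs]
  have hθ {r s : ℝ} (hr : r ∈ Ioo (0 : ℝ) 1) (hs : s ∈ Ioo (0 : ℝ) 1) : θ (1 - r) = θ (1 - s) :=
    eq_of_two_mul_map_mul (f := fun r => θ (1 - r)) (fun _ hr _ hs => hmul hr hs)
      (fun r hr s hs => by linarith [hadd hr hs, hswap hs (hmul hr hs)]) hr hs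
  have hhalf : (1 / 2 : ℝ) ∈ Ioo (0 : ℝ) 1 := by norm_num
  refine ⟨L (1 / 2) + L (1 - 1 / 2), θ (1 - 1 / 2), fun x hx => ?_, fun x hx => ?_⟩
  · linarith [hswap hx hhalf, hθ hx hhalf]
  · simpa using hθ (Ioo.one_sub_mem hx) hhalf

end RotationInvariant

/-! ### The Rogers dilogarithm -/

/-- The homogeneous extension of the binary entropy; its additive coboundary vanishes. -/
noncomputable def entropyCochain (a b : ℝ) : ℝ :=
  Real.negMulLog a + Real.negMulLog b - Real.negMulLog (a + b)

/-- The Rogers dilogarithm, scaled by `2` and centred to be odd under `x ↦ 1 - x`. -/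
noncomputable def rogersDilog : ℝ → ℝ := logisticPrimitive entropyCochain

theorem entropyCochain_one_sub (t : ℝ) : entropyCochain t (1 - t) = Real.binEntropy t := by
  simp [entropyCochain, Real.binEntropy_eq_negMulLog_add_negMulLog_one_sub]

theorem isHomogeneousCochain_entropyCochain : IsHomogeneousCochain entropyCochain where
  smul l a b _ := by
    simp only [entropyCochain, ← mul_add, Real.negMulLog_mul]
    ring
  continuousOn := by
    simp only [entropyCochain_one_sub]
    exact Real.binEntropy_continuous.continuousOn

theorem addCoboundary_entropyCochain (p : ℝ × ℝ × ℝ) : addCoboundary entropyCochain p = 0 := by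
  simp only [addCoboundary, entropyCochain, add_assoc]
  ring

theorem differentiableAt_rogersDilog {x : ℝ} (hx : x ∈ Ioo 0 1) :
    DifferentiableAt ℝ rogersDilog x :=
  (isHomogeneousCochain_entropyCochain.hasDerivAt_logisticPrimitive hx).differentiableAt

theorem rogersDilog_one_sub (x : ℝ) : rogersDilog (1 - x) = -rogersDilog x := by
  set f : ℝ → ℝ := fun t => Real.binEntropy t / (t * (1 - t)) with hf
  have hsymm (t : ℝ) : f (1 - t) = f t := by
    simp only [hf, Real.binEntropy_one_sub, sub_sub_cancel, mul_comm]
  have hreflect := intervalIntegral.integral_comp_sub_left (a := 1 / 2) (b := x) f 1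
  simp only [hsymm] at hreflect
  simp only [rogersDilog, logisticPrimitive, entropyCochain_one_sub]
  rw [hreflect, intervalIntegral.integral_symm (1 - x), sub_half]

theorem rogersDilog_neg {x : ℝ} (hx : 0 < x) (hx2 : x < 1 / 2) : rogersDilog x < 0 := by
  have hmono : StrictMonoOn rogersDilog (Ioo 0 1) := by
    refine strictMonoOn_of_deriv_pos (convex_Ioo 0 1)
      (fun x hx => (differentiableAt_rogersDilog hx).continuousAt.continuousWithinAt)
      fun x hx => ?_
    rw [interior_Ioo] at hx
    have hderiv := isHomogeneousCochain_entropyCochain.hasDerivAt_logisticPrimitive hx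
    rw [rogersDilog, hderiv.deriv, entropyCochain_one_sub]
    exact div_pos (Real.binEntropy_pos hx.1 hx.2) (mul_pos hx.1 (sub_pos.2 hx.2))
  have hhalf : rogersDilog (1 / 2) = 0 := intervalIntegral.integral_same
  exact hhalf ▸ hmono ⟨hx, by linarith⟩ (by norm_num) hx2

theorem exists_spenceAbel_rogersDilog_eq :
    ∃ K, ∀ p ∈ P2, spenceAbel rogersDilog p = K := by
  have hflow : ∀ p ∈ P2, flowDeriv (spenceAbel rogersDilog) p = 0 := fun p ⟨hx, hxy, hy⟩ =>
    (isHomogeneousCochain_entropyCochain.flowDeriv_spenceAbel_logisticPrimitive hx hxy hy).trans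
      (addCoboundary_entropyCochain _)
  have hdiff : ∀ p ∈ P2, DifferentiableAt ℝ (spenceAbel rogersDilog) p := fun p hp =>
    differentiableAt_spenceAbel (fun _ => differentiableAt_rogersDilog) hp
  have hθ : ∀ p ∈ P2, spenceAbel rogersDilog p = spenceAbel rogersDilog
      (oddsRatio p.1 p.2 / (1 + oddsRatio p.1 p.2), 1 / 2) := fun p ⟨hx, hxy, hy⟩ =>
    eq_of_flowDeriv_eq_zero hdiff hflow hx hxy hy
  obtain ⟨-, K, -, hK⟩ := exists_const_of_rotate_eq (L := 0)
    (θ := fun u => spenceAbel rogersDilog (u / (1 + u), 1 / 2))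
    (fun p hp => spenceAbel_rotate_of_antisymm rogersDilog_one_sub hp)
    (fun p hp => by simpa [spenceAbel] using hθ p hp)
  exact ⟨K, fun p hp => (hθ p hp).trans (hK _ (oddsRatio_mem_Ioo hp.1 hp.2.1 hp.2.2))⟩

theorem spenceAbel_of_antisymm_of_sq_eq {L : ℝ → ℝ} (hL : ∀ x, L (1 - x) = -L x) {g : ℝ}
    (hg : g ^ 2 = g + 1) : spenceAbel L (1 + g, -g) = 5 * L (1 + g) := by
  have hne : g ≠ 0 := by rintro rfl; norm_num at hg
  have hsub : (-g - (1 + g)) / (1 - (1 + g)) = 1 + g := by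
    rw [sub_add_cancel_left]; field_simp; linarith
  have hdiv : (1 + g) / -g = -g := by field_simp; linarith
  have hodds : oddsRatio (1 + g) (-g) = 1 + g := by
    rw [oddsRatio, sub_add_cancel_left, sub_neg_eq_add]; field_simp; rw [hg]; ring
  have hneg : L (-g) = -L (1 + g) := by rw [← hL, sub_add_cancel_left]
  simp only [spenceAbel, hsub, hdiv, hodds, hneg]
  ring

open Real in
theorem exists_spenceAbel_rogersDilog_eq_ne_zero :
    ∃ K ≠ 0, ∀ p ∈ P2, spenceAbel rogersDilog p = K := by
  obtain ⟨K, hK⟩ := exists_spenceAbel_rogersDilog_eq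
  have hgt : -1 < goldenConj := neg_one_lt_goldenConj
  have hlt : goldenConj < -(1 / 2) := by nlinarith [goldenConj_sq, goldenConj_neg]
  refine ⟨K, ?_, hK⟩
  rw [← hK (1 + goldenConj, -goldenConj) ⟨by linarith, by linarith, by linarith⟩,
    spenceAbel_of_antisymm_of_sq_eq rogersDilog_one_sub goldenConj_sq]
  exact mul_ne_zero (by norm_num) (rogersDilog_neg (by linarith) (by linarith)).ne

/-! ### Möbius images of bounded functions and their averages -/

section Moebius

/-- The denominator of the fractional linear map of a real `2 × 2` matrix. -/
def moebiusDenom (A : Matrix (Fin 2) (Fin 2) ℝ) (t : ℝ) : ℝ :=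
  A 1 0 * t + A 1 1

/-- The fractional linear map of a real `2 × 2` matrix; its value at the pole is the junk value
`0`. -/
noncomputable def moebius (A : Matrix (Fin 2) (Fin 2) ℝ) (t : ℝ) : ℝ :=
  (A 0 0 * t + A 0 1) / moebiusDenom A t

/-- The density of the image of the signed measure `p(t) dt` under `moebius A`. -/
noncomputable def moebiusDensity (p : ℝ → ℝ) (A : Matrix (Fin 2) (Fin 2) ℝ) (α : ℝ) : ℝ :=
  p (moebius A.adjugate α) * (|A.det| / moebiusDenom A.adjugate α ^ 2)

variable {A B : Matrix (Fin 2) (Fin 2) ℝ} {t : ℝ}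

theorem moebiusDenom_mul (ht : moebiusDenom B t ≠ 0) :
    moebiusDenom (A * B) t = moebiusDenom A (moebius B t) * moebiusDenom B t := by
  unfold moebiusDenom moebius moebiusDenom at *
  simp only [Matrix.mul_apply, Fin.sum_univ_two]
  field_simp
  ring

theorem moebius_mul (ht : moebiusDenom B t ≠ 0) :
    moebius (A * B) t = moebius A (moebius B t) := by
  have numerator_eq : (A * B) 0 0 * t + (A * B) 0 1 =
      (A 0 0 * moebius B t + A 0 1) * moebiusDenom B t := by
    unfold moebius
    unfold moebiusDenom at *
    simp only [Matrix.mul_apply, Fin.sum_univ_two]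
    field_simp
    ring
  rw [moebius, moebiusDenom_mul ht, numerator_eq, mul_div_mul_right _ _ ht, ← moebius]

theorem moebiusDenom_adjugate_moebius (ht : moebiusDenom A t ≠ 0) :
    moebiusDenom A.adjugate (moebius A t) = A.det / moebiusDenom A t := by
  rw [eq_div_iff ht, ← moebiusDenom_mul ht, Matrix.adjugate_mul]
  simp [moebiusDenom]

theorem moebius_adjugate_moebius (hA : A.det ≠ 0) (ht : moebiusDenom A t ≠ 0) :
    moebius A.adjugate (moebius A t) = t := by
  rw [← moebius_mul ht, Matrix.adjugate_mul]
  simp [moebius, moebiusDenom, hA]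

theorem moebiusDenom_adjugate_moebius_ne_zero (hA : A.det ≠ 0) (ht : moebiusDenom A t ≠ 0) :
    moebiusDenom A.adjugate (moebius A t) ≠ 0 := by
  rw [moebiusDenom_adjugate_moebius ht]
  exact div_ne_zero hA ht

theorem adjugate_adjugate_two (A : Matrix (Fin 2) (Fin 2) ℝ) : A.adjugate.adjugate = A := by
  simpa using Matrix.adjugate_adjugate A (by simp)

theorem det_adjugate_two (A : Matrix (Fin 2) (Fin 2) ℝ) : A.adjugate.det = A.det := by
  simpa using Matrix.det_adjugate A

theorem image_moebius (hA : A.det ≠ 0) :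
    moebius A '' {t | moebiusDenom A t ≠ 0} = {α | moebiusDenom A.adjugate α ≠ 0} := by
  apply Subset.antisymm
  · rintro _ ⟨t, ht, rfl⟩
    exact moebiusDenom_adjugate_moebius_ne_zero hA ht
  · intro α hα
    have hA' : A.adjugate.det ≠ 0 := by rwa [det_adjugate_two]
    have denom_ne := moebiusDenom_adjugate_moebius_ne_zero hA' hα
    have left_inv := moebius_adjugate_moebius hA' hα
    rw [adjugate_adjugate_two] at denom_ne left_inv
    exact ⟨_, denom_ne, left_inv⟩

theorem ae_moebiusDenom_ne_zero (hA : A.det ≠ 0) : ∀ᵐ t, moebiusDenom A t ≠ 0 := by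
  have pole_subsingleton : {t | moebiusDenom A t = 0}.Subsingleton := by
    intro s hs t ht
    simp only [moebiusDenom, mem_ofPred_eq] at hs ht
    refine mul_left_cancel₀ (fun h => hA ?_) (show A 1 0 * s = A 1 0 * t by linarith)
    rw [Matrix.det_fin_two, h, show A 1 1 = 0 by rw [h] at hs; linarith]
    ring
  simpa [ae_iff] using pole_subsingleton.measure_zero volume

theorem hasDerivAt_moebius (ht : moebiusDenom A t ≠ 0) :
    HasDerivAt (moebius A) (A.det / moebiusDenom A t ^ 2) t := by
  have numerator := ((hasDerivAt_id t).const_mul (A 0 0)).add_const (A 0 1)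
  have denominator := ((hasDerivAt_id t).const_mul (A 1 0)).add_const (A 1 1)
  refine (numerator.div denominator ht).congr_deriv ?_
  rw [Matrix.det_fin_two, moebiusDenom]
  simp only [id_eq, mul_one]
  ring

theorem integral_mul_comp_moebius (p F : ℝ → ℝ) (hA : A.det ≠ 0) :
    ∫ t, p t * F (moebius A t) = ∫ α, F α * moebiusDensity p A α := by
  have hA' : A.adjugate.det ≠ 0 := by rwa [det_adjugate_two]
  set s : Set ℝ := {α | moebiusDenom A.adjugate α ≠ 0} with hs
  have measurable_s : MeasurableSet s :=
    (isOpen_ne_fun (by unfold moebiusDenom; fun_prop) continuous_const).measurableSet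
  have left_inv : ∀ α ∈ s, moebius A (moebius A.adjugate α) = α := fun α hα => by
    simpa only [adjugate_adjugate_two] using moebius_adjugate_moebius hA' hα
  have image_s : moebius A.adjugate '' s = {t | moebiusDenom A t ≠ 0} := by
    rw [hs, image_moebius hA', adjugate_adjugate_two]
  have change := integral_image_eq_integral_abs_deriv_smul measurable_s
    (fun α hα => (hasDerivAt_moebius hα).hasDerivWithinAt)
    (fun α hα β hβ h => by rw [← left_inv α hα, ← left_inv β hβ, h])
    (fun t => p t * F (moebius A t))
  rw [image_s, Measure.restrict_eq_self_of_ae_mem (s := {t | moebiusDenom A t ≠ 0})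
    (ae_moebiusDenom_ne_zero hA)] at change
  rw [change, setIntegral_congr_fun measurable_s (g := fun α => F α * moebiusDensity p A α),
    Measure.restrict_eq_self_of_ae_mem (s := s) (ae_moebiusDenom_ne_zero hA')]
  intro α hα
  simp only [left_inv α hα, det_adjugate_two, moebiusDensity, abs_div, abs_pow, sq_abs,
    smul_eq_mul]
  ring

theorem exists_isCompact_moebiusDensity_eq_zero {P : Type*} [TopologicalSpace P]
    [LocallyCompactSpace P] {A : P → Matrix (Fin 2) (Fin 2) ℝ} {p : ℝ → ℝ} {Ω : Set P} {θ : P}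
    (hpc : HasCompactSupport p) (hΩ : IsOpen Ω)
    (hA : ∀ i j, ContinuousOn (fun θ => A θ i j) Ω) (hdet : ∀ θ ∈ Ω, (A θ).det ≠ 0)
    (hden : ∀ θ ∈ Ω, ∀ t ∈ tsupport p, moebiusDenom (A θ) t ≠ 0) (hθ : θ ∈ Ω) :
    ∃ K : Set ℝ, IsCompact K ∧ ∀ᶠ η in nhds θ, ∀ α ∉ K, moebiusDensity p (A η) α = 0 := by
  obtain ⟨V, hV, hVΩ, hVc⟩ := local_compact_nhds (hΩ.mem_nhds hθ)
  refine ⟨(fun x : P × ℝ => moebius (A x.1) x.2) '' (V ×ˢ tsupport p), ?_, ?_⟩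
  · refine (hVc.prod hpc).image_of_continuousOn ?_
    have entry (i j) : ContinuousOn (fun x : P × ℝ => A x.1 i j) (V ×ˢ tsupport p) :=
      (hA i j).comp continuousOn_fst fun x hx => hVΩ hx.1
    exact (((entry 0 0).mul continuousOn_snd).add (entry 0 1)).div
      (((entry 1 0).mul continuousOn_snd).add (entry 1 1)) fun x hx => hden _ (hVΩ hx.1) _ hx.2
  · filter_upwards [hV] with η hη α hα
    contrapose! hα
    have hα' : moebiusDenom (A η).adjugate α ≠ 0 := fun h => hα (by simp [moebiusDensity, h])
    refine ⟨(η, moebius (A η).adjugate α),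
      ⟨hη, subset_tsupport _ (left_ne_zero_of_mul hα)⟩, ?_⟩
    simpa only [adjugate_adjugate_two] using
      moebius_adjugate_moebius (by simpa only [det_adjugate_two] using hdet η (hVΩ hη)) hα'

end Moebius

section MoebiusFamily

variable {P : Type*} [NormedAddCommGroup P] [NormedSpace ℝ P]
  {A : P → Matrix (Fin 2) (Fin 2) ℝ} {p : ℝ → ℝ} {n : ℕ∞} {θ : P} {t : ℝ}

theorem contDiffAt_adjugate_apply (hA : ∀ i j, ContDiffAt ℝ n (fun θ => A θ i j) θ)
    (i j : Fin 2) : ContDiffAt ℝ n (fun θ => (A θ).adjugate i j) θ := by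
  simp only [Matrix.adjugate_fin_two]
  fin_cases i <;> fin_cases j
  · exact hA 1 1
  · exact (hA 0 1).neg
  · exact (hA 1 0).neg
  · exact hA 0 0

theorem contDiffAt_affine {u v : P → ℝ} (hu : ContDiffAt ℝ n u θ) (hv : ContDiffAt ℝ n v θ)
    (t : ℝ) : ContDiffAt ℝ n (fun x : P × ℝ => u x.1 * x.2 + v x.1) (θ, t) :=
  ((hu.comp (θ, t) contDiffAt_fst).mul contDiffAt_snd).add (hv.comp (θ, t) contDiffAt_fst)

theorem contDiffAt_moebius (hA : ∀ i j, ContDiffAt ℝ n (fun θ => A θ i j) θ)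
    (ht : moebiusDenom (A θ) t ≠ 0) :
    ContDiffAt ℝ n (fun x : P × ℝ => moebius (A x.1) x.2) (θ, t) :=
  (contDiffAt_affine (hA 0 0) (hA 0 1) t).div (contDiffAt_affine (hA 1 0) (hA 1 1) t) ht

theorem moebius_numerator_ne_zero {A : Matrix (Fin 2) (Fin 2) ℝ} (hA : A.det ≠ 0)
    (ht : moebiusDenom A t = 0) : A 0 0 * t + A 0 1 ≠ 0 := by
  rw [moebiusDenom] at ht
  intro hnum
  apply hA
  rw [Matrix.det_fin_two, show A 1 1 = -(A 1 0 * t) by linarith,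
    show A 0 1 = -(A 0 0 * t) by linarith]
  ring

/-- Near the pole the numerator dominates, so `moebius` leaves the support of `p`. -/
theorem eventually_comp_moebius_mul_div_eq_zero (hp : HasCompactSupport p)
    (hA : ∀ i j, ContDiffAt ℝ 0 (fun θ => A θ i j) θ) (hdet : (A θ).det ≠ 0)
    (ht : moebiusDenom (A θ) t = 0) (c : P → ℝ) :
    ∀ᶠ x in nhds (θ, t),
      p (moebius (A x.1) x.2) * (c x.1 / moebiusDenom (A x.1) x.2 ^ 2) = 0 := by
  obtain ⟨r, hr⟩ := hp.isBounded.exists_norm_le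
  have numerator_dominates : ∀ᶠ x in nhds (θ, t),
      r * |moebiusDenom (A x.1) x.2| < |A x.1 0 0 * x.2 + A x.1 0 1| := by
    refine ((contDiffAt_affine (n := 0) (hA 1 0) (hA 1 1) t).continuousAt.abs.const_mul
      r).eventually_lt (contDiffAt_affine (n := 0) (hA 0 0) (hA 0 1) t).continuousAt.abs ?_
    rw [show A θ 1 0 * t + A θ 1 1 = 0 from ht]
    simpa using moebius_numerator_ne_zero hdet ht
  filter_upwards [numerator_dominates] with x hx
  by_cases hden : moebiusDenom (A x.1) x.2 = 0
  · simp [hden]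
  · have outside : moebius (A x.1) x.2 ∉ tsupport p := by
      intro hmem
      have hle := hr _ hmem
      rw [moebius, Real.norm_eq_abs, abs_div, div_le_iff₀ (abs_pos.2 hden)] at hle
      exact hle.not_gt hx
    rw [image_eq_zero_of_notMem_tsupport outside, zero_mul]

theorem contDiffAt_moebiusDensity (hp : ContDiff ℝ n p) (hpc : HasCompactSupport p)
    (hA : ∀ i j, ContDiffAt ℝ n (fun θ => A θ i j) θ) (hdet : (A θ).det ≠ 0) (α : ℝ) :
    ContDiffAt ℝ n (fun x : P × ℝ => moebiusDensity p (A x.1) x.2) (θ, α) := by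
  have hadj := contDiffAt_adjugate_apply hA
  by_cases hα : moebiusDenom (A θ).adjugate α = 0
  · refine (contDiffAt_const (c := (0 : ℝ))).congr_of_eventuallyEq ?_
    exact eventually_comp_moebius_mul_div_eq_zero hpc (fun i j => (hadj i j).of_le (by simp))
      (by rwa [det_adjugate_two]) hα (fun θ => |(A θ).det|)
  · have smooth_det : ContDiffAt ℝ n (fun θ => (A θ).det) θ := by
      simp only [Matrix.det_fin_two]
      exact ((hA 0 0).mul (hA 1 1)).sub ((hA 0 1).mul (hA 1 0))
    have abs_det : ContDiffAt ℝ n (fun x : P × ℝ => |(A x.1).det|) (θ, α) :=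
      ContDiffAt.comp (g := fun η => |(A η).det|) (f := Prod.fst) (θ, α)
        (ContDiffAt.comp (g := fun d : ℝ => |d|) θ (contDiffAt_abs hdet) smooth_det) contDiffAt_fst
    have denominator := (contDiffAt_affine (hadj 1 0) (hadj 1 1) α).pow 2
    exact (hp.contDiffAt.comp (θ, α) (contDiffAt_moebius hadj hα)).mul
      (abs_det.div denominator (pow_ne_zero 2 hα))

theorem continuous_moebiusDensity (hp : Continuous p) (hpc : HasCompactSupport p)
    {A : Matrix (Fin 2) (Fin 2) ℝ} (hA : A.det ≠ 0) : Continuous (moebiusDensity p A) := by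
  rw [continuous_iff_continuousAt]
  intro α
  have joint := contDiffAt_moebiusDensity (n := 0) (A := fun _ : ℝ => A) (θ := 0)
    (contDiff_zero.2 hp) hpc (fun _ _ => contDiffAt_const) hA α
  exact joint.continuousAt.comp (f := fun a : ℝ => ((0 : ℝ), a)) (by fun_prop)

end MoebiusFamily

section MoebiusIntegral

theorem quasiMeasurePreserving_of_differentiableOn_leftInverse {E : Type*}
    [NormedAddCommGroup E] [NormedSpace ℝ E] [FiniteDimensional ℝ E] [MeasurableSpace E]
    [BorelSpace E] (μ : Measure E) [μ.IsAddHaarMeasure] {Ψ Φ : E → E} {U V : Set E}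
    (hΨ : Measurable Ψ) (hUV : MapsTo Ψ U V) (hΦ : DifferentiableOn ℝ Φ V)
    (hinv : LeftInvOn Φ Ψ U) :
    Measure.QuasiMeasurePreserving Ψ (μ.restrict U) (μ.restrict V) := by
  refine ⟨hΨ, Measure.AbsolutelyContinuous.mk fun s hs hsV => ?_⟩
  rw [Measure.restrict_apply hs] at hsV
  rw [Measure.map_apply hΨ hs, Measure.restrict_apply (hΨ hs)]
  refine measure_mono_null ?_ (addHaar_image_eq_zero_of_differentiableOn_of_addHaar_eq_zero μ
    (hΦ.mono (inter_subset_right (s := s))) hsV)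
  rintro x ⟨hxs, hxU⟩
  exact ⟨Ψ x, ⟨hxs, hUV hxU⟩, hinv hxU⟩

theorem measurable_moebius (A : Matrix (Fin 2) (Fin 2) ℝ) : Measurable (moebius A) := by
  unfold moebius moebiusDenom
  fun_prop

theorem quasiMeasurePreserving_moebius {A : Matrix (Fin 2) (Fin 2) ℝ} (hA : A.det ≠ 0) :
    Measure.QuasiMeasurePreserving (moebius A) := by
  have off_poles := quasiMeasurePreserving_of_differentiableOn_leftInverse volume
    (U := {t | moebiusDenom A t ≠ 0}) (V := {α | moebiusDenom A.adjugate α ≠ 0})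
    (measurable_moebius A) (fun t ht => moebiusDenom_adjugate_moebius_ne_zero hA ht)
    (fun α hα => (hasDerivAt_moebius hα).differentiableAt.differentiableWithinAt)
    (fun t ht => moebius_adjugate_moebius hA ht)
  rw [Measure.restrict_eq_self_of_ae_mem (s := {t | moebiusDenom A t ≠ 0})
    (ae_moebiusDenom_ne_zero hA)] at off_poles
  exact off_poles.mono_right Measure.absolutelyContinuous_restrict

variable {p q : ℝ → ℝ} {Q : ℝ × ℝ → ℝ} {M : ℝ}

theorem integrable_mul_comp_moebius_prod {A B : Matrix (Fin 2) (Fin 2) ℝ} (hp : Integrable p)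
    (hq : Integrable q) (hQ : AEStronglyMeasurable Q) (hM : ∀ x, |Q x| ≤ M) (hA : A.det ≠ 0)
    (hB : B.det ≠ 0) :
    Integrable fun x : ℝ × ℝ => p x.1 * q x.2 * Q (moebius A x.1, moebius B x.2) :=
  (hp.mul_prod hq).mul_bdd (c := M) (hQ.comp_quasiMeasurePreserving
    (QuasiMeasurePreserving.prodMap (quasiMeasurePreserving_moebius hA)
      (quasiMeasurePreserving_moebius hB)))
    (Filter.Eventually.of_forall fun x => hM (moebius A x.1, moebius B x.2))

theorem integral_mul_comp_moebius_prod {A B : Matrix (Fin 2) (Fin 2) ℝ} (hp : Continuous p)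
    (hpc : HasCompactSupport p) (hq : Continuous q) (hqc : HasCompactSupport q)
    (hQ : AEStronglyMeasurable Q) (hM : ∀ x, |Q x| ≤ M) (hA : A.det ≠ 0) (hB : B.det ≠ 0)
    (hA' : HasCompactSupport (moebiusDensity p A)) (hB' : HasCompactSupport (moebiusDensity q B)) :
    ∫ x : ℝ × ℝ, p x.1 * q x.2 * Q (moebius A x.1, moebius B x.2) =
      ∫ x : ℝ × ℝ, Q x * (moebiusDensity p A x.1 * moebiusDensity q B x.2) := by
  have left_integrable := integrable_mul_comp_moebius_prod
    (hp.integrable_of_hasCompactSupport hpc) (hq.integrable_of_hasCompactSupport hqc) hQ hM hA hB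
  have densities_integrable : Integrable fun x : ℝ × ℝ =>
      moebiusDensity p A x.1 * moebiusDensity q B x.2 :=
    ((continuous_moebiusDensity hp hpc hA).integrable_of_hasCompactSupport hA').mul_prod
      ((continuous_moebiusDensity hq hqc hB).integrable_of_hasCompactSupport hB')
  have right_integrable := densities_integrable.bdd_mul hQ (Filter.Eventually.of_forall hM)
  calc ∫ x : ℝ × ℝ, p x.1 * q x.2 * Q (moebius A x.1, moebius B x.2)
      = ∫ s, p s * ∫ y, q y * Q (moebius A s, moebius B y) := by
        rw [Measure.volume_eq_prod, integral_prod _ left_integrable]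
        simp only [mul_assoc, integral_const_mul]
    _ = ∫ s, p s * ∫ β, Q (moebius A s, β) * moebiusDensity q B β := by
        congr with s
        rw [integral_mul_comp_moebius q (fun β => Q (moebius A s, β)) hB]
    _ = ∫ α, (∫ β, Q (α, β) * moebiusDensity q B β) * moebiusDensity p A α :=
        integral_mul_comp_moebius p (fun α => ∫ β, Q (α, β) * moebiusDensity q B β) hA
    _ = ∫ x : ℝ × ℝ, Q x * (moebiusDensity p A x.1 * moebiusDensity q B x.2) := by
        rw [Measure.volume_eq_prod, integral_prod _ right_integrable]
        congr with α
        rw [← integral_mul_const]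
        congr with β
        ring

variable {P : Type*} [NormedAddCommGroup P] [NormedSpace ℝ P] {n : ℕ∞} {Ω : Set P} {θ : P}

theorem contDiffAt_integral_mul {E : Type*} [NormedAddCommGroup E] [NormedSpace ℝ E]
    [MeasurableSpace E] [BorelSpace E] {μ : Measure E} {f : E → ℝ} {k : P → E → ℝ} {K : Set E}
    (hf : LocallyIntegrable f μ) (hK : IsCompact K)
    (hkK : ∀ᶠ η in nhds θ, ∀ x ∉ K, k η x = 0)
    (hk : ∀ᶠ η in nhds θ, ∀ x, ContDiffAt ℝ n (fun z : P × E => k z.1 z.2) (η, x)) :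
    ContDiffAt ℝ n (fun η => ∫ x, f x * k η x ∂μ) θ := by
  obtain ⟨W, hW, hWopen, hθW⟩ := eventually_nhds_iff.1 (hkK.and hk)
  have convolution_smooth := contDiffOn_convolution_right_with_param_comp (μ := μ) (f := f)
    (ContinuousLinearMap.mul ℝ ℝ) (g := fun η x => k η (-x)) (v := fun _ => (0 : E)) (n := n)
    contDiffOn_const hWopen hK.neg (fun η x hη hx => (hW η hη).1 _ hx) hf (fun z hz =>
      (ContDiffAt.comp (f := fun z : P × E => (z.1, -z.2)) z ((hW z.1 hz.1).2 _)
        (by fun_prop)).contDiffWithinAt)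
  simpa [convolution] using convolution_smooth.contDiffAt (hWopen.mem_nhds hθW)

theorem contDiffOn_integral_mul_comp_moebius_prod [LocallyCompactSpace P]
    {A B : P → Matrix (Fin 2) (Fin 2) ℝ} (hp : ContDiff ℝ n p) (hpc : HasCompactSupport p)
    (hq : ContDiff ℝ n q) (hqc : HasCompactSupport q)
    (hQ : AEStronglyMeasurable Q) (hM : ∀ x, |Q x| ≤ M) (hΩ : IsOpen Ω)
    (hA : ∀ i j, ContDiffOn ℝ n (fun θ => A θ i j) Ω)
    (hB : ∀ i j, ContDiffOn ℝ n (fun θ => B θ i j) Ω)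
    (hdetA : ∀ θ ∈ Ω, (A θ).det ≠ 0) (hdetB : ∀ θ ∈ Ω, (B θ).det ≠ 0)
    (hdenA : ∀ θ ∈ Ω, ∀ t ∈ tsupport p, moebiusDenom (A θ) t ≠ 0)
    (hdenB : ∀ θ ∈ Ω, ∀ t ∈ tsupport q, moebiusDenom (B θ) t ≠ 0) :
    ContDiffOn ℝ n
      (fun θ => ∫ x : ℝ × ℝ, p x.1 * q x.2 * Q (moebius (A θ) x.1, moebius (B θ) x.2)) Ω := by
  intro θ hθ
  obtain ⟨K, hK, hpK⟩ := exists_isCompact_moebiusDensity_eq_zero hpc hΩ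
    (fun i j => (hA i j).continuousOn) hdetA hdenA hθ
  obtain ⟨J, hJ, hqJ⟩ := exists_isCompact_moebiusDensity_eq_zero hqc hΩ
    (fun i j => (hB i j).continuousOn) hdetB hdenB hθ
  have hQloc : LocallyIntegrable Q := (locallyIntegrable_const M).mono hQ
    (Filter.Eventually.of_forall fun x => (hM x).trans (le_abs_self M))
  have densities_smooth : ∀ᶠ η in nhds θ, ∀ x : ℝ × ℝ, ContDiffAt ℝ n
      (fun z : P × ℝ × ℝ => moebiusDensity p (A z.1) z.2.1 * moebiusDensity q (B z.1) z.2.2)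
      (η, x) := by
    filter_upwards [hΩ.mem_nhds hθ] with η hη x
    have hΩη := hΩ.mem_nhds hη
    have smoothA := contDiffAt_moebiusDensity hp hpc (fun i j => (hA i j).contDiffAt hΩη)
      (hdetA η hη) x.1
    have smoothB := contDiffAt_moebiusDensity hq hqc (fun i j => (hB i j).contDiffAt hΩη)
      (hdetB η hη) x.2
    exact (smoothA.comp (f := fun z : P × ℝ × ℝ => (z.1, z.2.1)) (η, x) (by fun_prop)).mul
      (smoothB.comp (f := fun z : P × ℝ × ℝ => (z.1, z.2.2)) (η, x) (by fun_prop))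
  have densities_supported : ∀ᶠ η in nhds θ, ∀ x ∉ K ×ˢ J,
      moebiusDensity p (A η) x.1 * moebiusDensity q (B η) x.2 = 0 := by
    filter_upwards [hpK, hqJ] with η hηp hηq x hx
    rcases not_and_or.1 hx with hx | hx
    · rw [hηp _ hx, zero_mul]
    · rw [hηq _ hx, mul_zero]
  have smooth := contDiffAt_integral_mul hQloc (hK.prod hJ) densities_supported densities_smooth
  refine (smooth.congr_of_eventuallyEq ?_).contDiffWithinAt
  filter_upwards [hpK, hqJ, hΩ.mem_nhds hθ] with η hηp hηq hη
  exact integral_mul_comp_moebius_prod hp.continuous hpc hq.continuous hqc hQ hM (hdetA η hη)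
    (hdetB η hη) (.intro hK hηp) (.intro hJ hηq)

end MoebiusIntegral

/-! ### Cross ratios of points on the line -/

section CrossRatio

/-- The cross ratio of four points of the line; it lies in `(0, 1)` when `a < b < c < d`. -/
noncomputable def crossRatio (a b c d : ℝ) : ℝ :=
  (b - a) * (d - c) / ((c - a) * (d - b))

/-- A function of two cross ratios, read as a function of five ordered points of the projective
line. In this form the six-term relation is the cocycle identity. -/
noncomputable def fivePoint (R : ℝ × ℝ → ℝ) (a b c d e : ℝ) : ℝ :=
  R (crossRatio a b d e, crossRatio a c d e)

variable {a b c d e f : ℝ}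

theorem crossRatio_mul_crossRatio (hab : a < b) (hbc : b < c) (hcd : c < d) (hde : d < e) :
    crossRatio a b c e * crossRatio a c d e = crossRatio a b d e := by
  have hca : c - a ≠ 0 := by linarith
  have hec : e - c ≠ 0 := by linarith
  simp only [crossRatio]
  field_simp

theorem one_sub_crossRatio (hac : a < c) (hbd : b < d) :
    1 - crossRatio a b c d = (c - b) * (d - a) / ((c - a) * (d - b)) := by
  have hca : c - a ≠ 0 := by linarith
  have hdb : d - b ≠ 0 := by linarith
  simp only [crossRatio]
  field_simp
  ring

theorem crossRatio_sub_crossRatio (had : a < d) (hbe : b < e) (hce : c < e) :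
    crossRatio a c d e - crossRatio a b d e =
      (c - b) * (e - a) * (e - d) / ((d - a) * (e - b) * (e - c)) := by
  have hda : d - a ≠ 0 := by linarith
  have heb : e - b ≠ 0 := by linarith
  have hec : e - c ≠ 0 := by linarith
  simp only [crossRatio]
  field_simp
  ring

theorem crossRatio_pos (hab : a < b) (hbc : b < c) (hcd : c < d) : 0 < crossRatio a b c d :=
  div_pos (mul_pos (by linarith) (by linarith)) (mul_pos (by linarith) (by linarith))

theorem crossRatio_lt_one (hab : a < b) (hbc : b < c) (hcd : c < d) : crossRatio a b c d < 1 := by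
  rw [← sub_pos, one_sub_crossRatio (by linarith) (by linarith)]
  exact div_pos (mul_pos (by linarith) (by linarith)) (mul_pos (by linarith) (by linarith))

theorem crossRatio_lt_crossRatio (hab : a < b) (hbc : b < c) (hcd : c < d) (hde : d < e) :
    crossRatio a b d e < crossRatio a c d e := by
  rw [← crossRatio_mul_crossRatio hab hbc hcd hde]
  exact mul_lt_of_lt_one_left (crossRatio_pos (hab.trans hbc) hcd hde)
    (crossRatio_lt_one hab hbc (hcd.trans hde))

theorem crossRatio_div_crossRatio (hab : a < b) (hbc : b < c) (hcd : c < d) (hde : d < e) :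
    crossRatio a b d e / crossRatio a c d e = crossRatio a b c e := by
  rw [← crossRatio_mul_crossRatio hab hbc hcd hde,
    mul_div_cancel_right₀ _ (crossRatio_pos (hab.trans hbc) hcd hde).ne']

theorem crossRatio_sub_div_one_sub (hab : a < b) (hbc : b < c) (hcd : c < d) (hde : d < e) :
    (crossRatio a c d e - crossRatio a b d e) / (1 - crossRatio a b d e) =
      crossRatio b c d e := by
  have hea : e - a ≠ 0 := by linarith
  have hdb : d - b ≠ 0 := by linarith
  have hda : d - a ≠ 0 := by linarith
  have heb : e - b ≠ 0 := by linarith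
  have hec : e - c ≠ 0 := by linarith
  rw [crossRatio_sub_crossRatio (by linarith) (by linarith) (by linarith),
    one_sub_crossRatio (by linarith) (by linarith), crossRatio]
  field_simp

theorem oddsRatio_crossRatio (hab : a < b) (hbc : b < c) (hcd : c < d) (hde : d < e) :
    oddsRatio (crossRatio a b d e) (crossRatio a c d e) = crossRatio a b c d := by
  have hea : e - a ≠ 0 := by linarith
  have hdb : d - b ≠ 0 := by linarith
  have hda : d - a ≠ 0 := by linarith
  have hca : c - a ≠ 0 := by linarith
  have hed : e - d ≠ 0 := by linarith
  have heb : e - b ≠ 0 := by linarith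
  have hec : e - c ≠ 0 := by linarith
  rw [oddsRatio, one_sub_crossRatio (by linarith) (by linarith),
    one_sub_crossRatio (by linarith) (by linarith)]
  simp only [crossRatio]
  field_simp

theorem spenceAbel_crossRatio (L : ℝ → ℝ) (hab : a < b) (hbc : b < c) (hcd : c < d)
    (hde : d < e) :
    spenceAbel L (crossRatio a b d e, crossRatio a c d e) =
      L (crossRatio b c d e) - L (crossRatio a c d e) + L (crossRatio a b d e)
        - L (crossRatio a b c e) + L (crossRatio a b c d) := by
  simp only [spenceAbel, crossRatio_sub_div_one_sub hab hbc hcd hde,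
    crossRatio_div_crossRatio hab hbc hcd hde, oddsRatio_crossRatio hab hbc hcd hde]

theorem IsSixTerm.fivePoint_cocycle {R : ℝ × ℝ → ℝ} (hR : IsSixTerm R) (hab : a < b)
    (hbc : b < c) (hcd : c < d) (hde : d < e) (hef : e < f) :
    fivePoint R b c d e f - fivePoint R a c d e f + fivePoint R a b d e f
      - fivePoint R a b c e f + fivePoint R a b c d f - fivePoint R a b c d e = 0 := by
  have hac := hab.trans hbc
  have hbd := hbc.trans hcd
  have hce := hcd.trans hde
  have sixTerm := hR (crossRatio a b e f) (crossRatio a c e f) (crossRatio a d e f)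
    (crossRatio_pos hab (hbd.trans hde) hef) (crossRatio_lt_crossRatio hab hbc hce hef)
    (crossRatio_lt_crossRatio hac hcd hde hef) (crossRatio_lt_one (hac.trans hcd) hde hef)
  rw [crossRatio_div_crossRatio hab hbd hde hef, crossRatio_div_crossRatio hac hcd hde hef,
    crossRatio_sub_div_one_sub hab hbc hce hef, crossRatio_sub_div_one_sub hab hbd hde hef,
    oddsRatio_crossRatio hab hbd hde hef, oddsRatio_crossRatio hac hcd hde hef] at sixTerm
  simp only [fivePoint]
  linarith

end CrossRatio

section Charts

/-- The matrix of the projective map sending `a, b, d` to `∞, 0, 1`. -/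
def normalizer (a b d : ℝ) : Matrix (Fin 2) (Fin 2) ℝ :=
  !![d - a, -(b * (d - a)); d - b, -(a * (d - b))]

/-- The matrix of the projective map sending `y` to the point `t` with
`crossRatio x₀ x₂ t x₃ = y`. -/
def insertion (x₀ x₂ x₃ : ℝ) : Matrix (Fin 2) (Fin 2) ℝ :=
  !![x₀ * (x₃ - x₂), x₃ * (x₂ - x₀); x₃ - x₂, x₂ - x₀]

variable {a b d s t x₀ x₁ x₂ x₃ y : ℝ}

theorem det_normalizer (a b d : ℝ) : (normalizer a b d).det = (d - a) * (d - b) * (b - a) := by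
  rw [normalizer, Matrix.det_fin_two_of]
  ring

theorem det_insertion (x₀ x₂ x₃ : ℝ) :
    (insertion x₀ x₂ x₃).det = (x₃ - x₂) * (x₂ - x₀) * (x₀ - x₃) := by
  rw [insertion, Matrix.det_fin_two_of]
  ring

theorem det_normalizer_ne_zero (hab : a < b) (hbd : b < d) : (normalizer a b d).det ≠ 0 := by
  rw [det_normalizer]
  exact mul_ne_zero (mul_ne_zero (by linarith) (by linarith)) (by linarith)

theorem det_insertion_ne_zero (h02 : x₀ < x₂) (h23 : x₂ < x₃) :
    (insertion x₀ x₂ x₃).det ≠ 0 := by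
  rw [det_insertion]
  exact mul_ne_zero (mul_ne_zero (by linarith) (by linarith)) (by linarith)

theorem moebiusDenom_normalizer (a b d t : ℝ) :
    moebiusDenom (normalizer a b d) t = (t - a) * (d - b) := by
  simp [moebiusDenom, normalizer]
  ring

theorem moebius_normalizer (a b d t : ℝ) :
    moebius (normalizer a b d) t = (t - b) * (d - a) / ((t - a) * (d - b)) := by
  rw [moebius, moebiusDenom_normalizer]
  simp [normalizer]
  ring

theorem moebiusDenom_insertion_pos (h02 : x₀ < x₂) (h23 : x₂ < x₃) (hy : 0 < y) :
    0 < moebiusDenom (insertion x₀ x₂ x₃) y := by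
  simp only [moebiusDenom, insertion, Matrix.of_apply, Matrix.cons_val', Matrix.cons_val_zero,
    Matrix.cons_val_one, Matrix.cons_val_fin_one]
  nlinarith

theorem moebius_insertion (x₀ x₂ x₃ y : ℝ) :
    moebius (insertion x₀ x₂ x₃) y =
      (x₀ * (x₃ - x₂) * y + x₃ * (x₂ - x₀)) / ((x₃ - x₂) * y + (x₂ - x₀)) := by
  simp [moebius, moebiusDenom, insertion]

theorem moebius_insertion_mem_Ioo (h02 : x₀ < x₂) (h23 : x₂ < x₃) (hy : y ∈ Ioo (0 : ℝ) 1) :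
    moebius (insertion x₀ x₂ x₃) y ∈ Ioo x₂ x₃ := by
  have hden : 0 < (x₃ - x₂) * y + (x₂ - x₀) := by nlinarith [hy.1]
  rw [moebius_insertion, mem_Ioo, lt_div_iff₀ hden, div_lt_iff₀ hden, ← sub_pos,
    ← sub_pos (b := x₀ * _ * _ + _)]
  constructor
  · calc 0 < (x₂ - x₀) * (x₃ - x₂) * (1 - y) :=
          mul_pos (mul_pos (by linarith) (by linarith)) (by linarith [hy.2])
      _ = _ := by ring
  · calc 0 < y * (x₃ - x₂) * (x₃ - x₀) :=
          mul_pos (mul_pos hy.1 (by linarith)) (by linarith)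
      _ = _ := by ring

theorem crossRatio_moebius_insertion (h02 : x₀ < x₂) (h23 : x₂ < x₃) (hy : y ∈ Ioo (0 : ℝ) 1) :
    crossRatio x₀ x₂ (moebius (insertion x₀ x₂ x₃) y) x₃ = y := by
  have hden : (x₃ - x₂) * y + (x₂ - x₀) ≠ 0 := by nlinarith [hy.1]
  have h20 : x₂ - x₀ ≠ 0 := by linarith
  have h30 : x₃ - x₀ ≠ 0 := by linarith
  have h32 : x₃ - x₂ ≠ 0 := by linarith
  have left_gap : moebius (insertion x₀ x₂ x₃) y - x₀ =
      (x₂ - x₀) * (x₃ - x₀) / ((x₃ - x₂) * y + (x₂ - x₀)) := by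
    rw [moebius_insertion]
    field_simp
    ring
  have right_gap : x₃ - moebius (insertion x₀ x₂ x₃) y =
      y * (x₃ - x₂) * (x₃ - x₀) / ((x₃ - x₂) * y + (x₂ - x₀)) := by
    rw [moebius_insertion]
    field_simp
    ring
  calc crossRatio x₀ x₂ (moebius (insertion x₀ x₂ x₃) y) x₃
      = y * (((x₃ - x₂) * y + (x₂ - x₀)) / ((x₃ - x₂) * y + (x₂ - x₀))) := by
        rw [crossRatio, left_gap, right_gap]
        field_simp
    _ = y := by rw [div_self hden, mul_one]

theorem fivePoint_moebius_insertion (R : ℝ × ℝ → ℝ) (h01 : x₀ < x₁) (h12 : x₁ < x₂)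
    (h23 : x₂ < x₃) (hy : y ∈ Ioo (0 : ℝ) 1) :
    fivePoint R x₀ x₁ x₂ (moebius (insertion x₀ x₂ x₃) y) x₃ =
      R (crossRatio x₀ x₁ x₂ x₃ * y, y) := by
  have ht := moebius_insertion_mem_Ioo (h01.trans h12) h23 hy
  rw [fivePoint, ← crossRatio_mul_crossRatio h01 h12 ht.1 ht.2,
    crossRatio_moebius_insertion (h01.trans h12) h23 hy]

end Charts

section ChartCochain

variable {R : ℝ × ℝ → ℝ} {a b c d s t M : ℝ}

theorem moebius_normalizer_left (a b d : ℝ) : moebius (normalizer a b d) b = 0 := by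
  rw [moebius_normalizer, sub_self, zero_mul, zero_div]

theorem moebius_normalizer_right (hab : a < b) (hbd : b < d) :
    moebius (normalizer a b d) d = 1 := by
  rw [moebius_normalizer, mul_comm, div_self (mul_ne_zero (by linarith) (by linarith))]

theorem moebius_normalizer_sub (hbd : b < d) (hs : a < s) (ht : a < t) :
    moebius (normalizer a b d) s - moebius (normalizer a b d) t =
      (b - a) * (d - a) * (s - t) / ((s - a) * (t - a) * (d - b)) := by
  have hsa : s - a ≠ 0 := by linarith
  have hta : t - a ≠ 0 := by linarith
  have hdb : d - b ≠ 0 := by linarith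
  rw [moebius_normalizer, moebius_normalizer]
  field_simp
  ring

theorem strictMonoOn_moebius_normalizer (hab : a < b) (hbd : b < d) :
    StrictMonoOn (moebius (normalizer a b d)) (Ioi a) := by
  intro t ht s hs hts
  rw [mem_Ioi] at ht hs
  rw [← sub_pos, moebius_normalizer_sub hbd hs ht]
  exact div_pos (mul_pos (mul_pos (by linarith) (by linarith)) (by linarith))
    (mul_pos (mul_pos (by linarith) (by linarith)) (by linarith))

theorem moebius_normalizer_sub_div_sub (hab : a < b) (hbd : b < d) (hac : a < c) (hct : c < t)
    (hts : t < s) :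
    (moebius (normalizer a b d) s - moebius (normalizer a b d) t) /
      (moebius (normalizer a b d) s - moebius (normalizer a b d) c) = crossRatio a c t s := by
  have hba : b - a ≠ 0 := by linarith
  have hda : d - a ≠ 0 := by linarith
  have hdb : d - b ≠ 0 := by linarith
  have hca : c - a ≠ 0 := by linarith
  have hta : t - a ≠ 0 := by linarith
  have hsa : s - a ≠ 0 := by linarith
  have hsc : s - c ≠ 0 := by linarith
  rw [moebius_normalizer_sub hbd (by linarith) (by linarith),
    moebius_normalizer_sub hbd (by linarith) (by linarith), crossRatio]
  field_simp

/-- The region where `∞, 0, min 1 τ, max 1 τ, σ` are distinct and in cyclic order. -/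
def chartDomain : Set (ℝ × ℝ) := {x | 0 < x.2 ∧ x.2 ≠ 1 ∧ max 1 x.2 < x.1}

/-- The pair of cross ratios of the five points `∞, 0, min 1 τ, max 1 τ, σ`. -/
noncomputable def chartRatios (x : ℝ × ℝ) : ℝ × ℝ :=
  ((x.1 - max 1 x.2) / x.1, (x.1 - max 1 x.2) / (x.1 - min 1 x.2))

/-- The five-point function of `R` at `∞, 0, 1, τ, σ` with `1, τ` put in order. Normalizing three
of its points reads every `fivePoint R` off from this one function, whichever side of the third
normalized point the fourth one lies on. -/
noncomputable def chartCochain (R : ℝ × ℝ → ℝ) : ℝ × ℝ → ℝ :=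
  chartDomain.indicator (R ∘ chartRatios)

theorem chartRatios_mem_P2 {x : ℝ × ℝ} (hx : x ∈ chartDomain) : chartRatios x ∈ P2 := by
  obtain ⟨hpos, hne, hmax⟩ := hx
  have hmin : 0 < min 1 x.2 := lt_min one_pos hpos
  have hlt : min 1 x.2 < max 1 x.2 := min_lt_max.2 hne.symm
  refine ⟨div_pos (by linarith) (by linarith), ?_, ?_⟩
  · exact div_lt_div_of_pos_left (by linarith) (by linarith) (by linarith)
  · exact (div_lt_one (by linarith)).2 (by linarith)

theorem abs_chartCochain_le (hM : ∀ p ∈ P2, |R p| ≤ M) (x : ℝ × ℝ) :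
    |chartCochain R x| ≤ M := by
  by_cases hx : x ∈ chartDomain
  · rw [chartCochain, indicator_of_mem hx]
    exact hM _ (chartRatios_mem_P2 hx)
  · rw [chartCochain, indicator_of_notMem hx, abs_zero]
    exact (abs_nonneg _).trans (hM (1 / 3, 1 / 2) (by norm_num [P2]))

theorem chartCochain_moebius_normalizer (R : ℝ × ℝ → ℝ) (hab : a < b) (hbd : b < d) (hbt : b < t)
    (htd : t ≠ d) (hds : d < s) (hts : t < s) :
    chartCochain R (moebius (normalizer a b d) s, moebius (normalizer a b d) t) =
      fivePoint R a b (min d t) (max d t) s := by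
  have hmono := strictMonoOn_moebius_normalizer hab hbd
  have hd : d ∈ Ioi a := hab.trans hbd
  have ht : t ∈ Ioi a := hab.trans hbt
  have hmin := hmono.monotoneOn.map_min hd ht
  have hmax := hmono.monotoneOn.map_max hd ht
  rw [moebius_normalizer_right hab hbd] at hmin hmax
  have hmem : (moebius (normalizer a b d) s, moebius (normalizer a b d) t) ∈ chartDomain := by
    refine ⟨?_, ?_, ?_⟩
    · exact (moebius_normalizer_left a b d).symm.trans_lt (hmono hab ht hbt)
    · exact fun h => htd (hmono.injOn ht hd (h.trans (moebius_normalizer_right hab hbd).symm))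
    · exact hmax.symm.trans_lt
        (hmono (mem_Ioi.2 (lt_max_of_lt_left hd)) (hd.out.trans hds) (max_lt hds hts))
  have hfirst : (moebius (normalizer a b d) s - moebius (normalizer a b d) (max d t)) /
      moebius (normalizer a b d) s = crossRatio a b (max d t) s := by
    rw [← moebius_normalizer_sub_div_sub hab hbd hab (lt_max_of_lt_left hbd) (max_lt hds hts),
      moebius_normalizer_left, sub_zero]
  have hsecond := moebius_normalizer_sub_div_sub hab hbd (hab.trans (lt_min hbd hbt))
    (min_lt_max.2 htd.symm) (max_lt hds hts)
  rw [chartCochain, indicator_of_mem hmem, Function.comp_apply, chartRatios, fivePoint]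
  simp only [← hmin, ← hmax, hfirst, hsecond]

theorem quasiMeasurePreserving_chart_of_snd_lt_one :
    Measure.QuasiMeasurePreserving
      (fun x : ℝ × ℝ => ((x.1 - 1) / x.1, (x.1 - 1) / (x.1 - x.2)))
      (volume.restrict {x | 0 < x.2 ∧ x.2 < 1 ∧ 1 < x.1}) (volume.restrict P2) := by
  refine quasiMeasurePreserving_of_differentiableOn_leftInverse volume
    (Φ := fun x => (1 / (1 - x.1), 1 / (1 - x.1) - (1 / (1 - x.1) - 1) / x.2))
    (by fun_prop) ?_ ?_ ?_
  · intro x hx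
    have hmem := chartRatios_mem_P2 (x := x) ⟨hx.1, hx.2.1.ne, max_lt hx.2.2 (hx.2.1.trans hx.2.2)⟩
    rwa [chartRatios, max_eq_left hx.2.1.le, min_eq_right hx.2.1.le] at hmem
  · rintro x ⟨hpos, hlt, hlt_one⟩
    have h₁ : 1 - x.1 ≠ 0 := by linarith
    have h₂ : x.2 ≠ 0 := by linarith
    exact DifferentiableAt.differentiableWithinAt (by fun_prop (disch := assumption))
  · rintro x ⟨hpos, hlt, hlt_one⟩
    have h₁ : x.1 - 1 ≠ 0 := by linarith
    have h₂ : x.1 ≠ 0 := by linarith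
    have hsub : 1 - (x.1 - 1) / x.1 = 1 / x.1 := by field_simp; ring
    ext
    · simp only [hsub]
      field_simp
    · simp only [hsub]
      field_simp
      ring

theorem quasiMeasurePreserving_chart_of_one_lt_snd :
    Measure.QuasiMeasurePreserving
      (fun x : ℝ × ℝ => ((x.1 - x.2) / x.1, (x.1 - x.2) / (x.1 - 1)))
      (volume.restrict {x | 1 < x.2 ∧ x.2 < x.1}) (volume.restrict P2) := by
  refine quasiMeasurePreserving_of_differentiableOn_leftInverse volume
    (Φ := fun x => (x.2 / (x.2 - x.1), x.2 * (1 - x.1) / (x.2 - x.1)))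
    (by fun_prop) ?_ ?_ ?_
  · rintro x ⟨hone, hlt⟩
    have hmem := chartRatios_mem_P2 (x := x)
      ⟨one_pos.trans hone, hone.ne', max_lt (hone.trans hlt) hlt⟩
    rwa [chartRatios, max_eq_right hone.le, min_eq_left hone.le] at hmem
  · rintro x ⟨-, hlt, -⟩
    have h₁ : x.2 - x.1 ≠ 0 := by linarith
    exact DifferentiableAt.differentiableWithinAt (by fun_prop (disch := assumption))
  · rintro x ⟨hone, hlt⟩
    have h₁ : x.1 - 1 ≠ 0 := by linarith
    have h₂ : x.1 - x.2 ≠ 0 := by linarith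
    have h₃ : x.1 ≠ 0 := by linarith
    have hone_sub : 1 - (x.1 - x.2) / x.1 = x.2 / x.1 := by field_simp; ring
    have hsub : (x.1 - x.2) / (x.1 - 1) - (x.1 - x.2) / x.1 =
        (x.1 - x.2) / ((x.1 - 1) * x.1) := by
      field_simp
      ring
    ext
    · simp only [hsub]
      field_simp
    · simp only [hone_sub, hsub]
      field_simp

theorem chartDomain_eq_union :
    chartDomain = {x | 0 < x.2 ∧ x.2 < 1 ∧ 1 < x.1} ∪ {x | 1 < x.2 ∧ x.2 < x.1} := by
  ext x
  simp only [chartDomain, mem_ofPred_eq, mem_union, max_lt_iff]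
  grind

theorem measurableSet_chartDomain : MeasurableSet chartDomain := by
  rw [chartDomain_eq_union]
  measurability

theorem aestronglyMeasurable_chartCochain (hR : AEStronglyMeasurable R (volume.restrict P2)) :
    AEStronglyMeasurable (chartCochain R) := by
  rw [chartCochain, aestronglyMeasurable_indicator_iff measurableSet_chartDomain,
    chartDomain_eq_union, aestronglyMeasurable_union_iff]
  constructor
  · refine (hR.comp_quasiMeasurePreserving quasiMeasurePreserving_chart_of_snd_lt_one).congr ?_
    filter_upwards [ae_restrict_mem (by measurability)] with x hx
    rw [Function.comp_apply, Function.comp_apply, chartRatios, max_eq_left hx.2.1.le,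
      min_eq_right hx.2.1.le]
  · refine (hR.comp_quasiMeasurePreserving quasiMeasurePreserving_chart_of_one_lt_snd).congr ?_
    filter_upwards [ae_restrict_mem (by measurability)] with x hx
    rw [Function.comp_apply, Function.comp_apply, chartRatios, max_eq_right hx.1.le,
      min_eq_left hx.1.le]

end ChartCochain

/-! ### Averaging a vertex of the cocycle -/

section ProductMeasure

variable {X Y : Type*} [MeasurableSpace X] [MeasurableSpace Y] {μ : Measure X} {ν : Measure Y}
  [SFinite μ] [SFinite ν] {p f : X → ℝ} {q g : Y → ℝ}

theorem integrable_mul_snd_of_integrable_prod (hp : ∫ x, p x ∂μ ≠ 0) (hq : Integrable q ν)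
    (h : Integrable (fun z : X × Y => p z.1 * q z.2 * (f z.1 + g z.2)) (μ.prod ν)) :
    Integrable (fun y => q y * g y) ν := by
  obtain ⟨x, hpx, hx⟩ : ∃ x, p x ≠ 0 ∧ Integrable (fun y => p x * q y * (f x + g y)) ν := by
    by_contra! hcon
    refine hp (integral_eq_zero_of_ae ?_)
    filter_upwards [h.prod_right_ae] with x hx
    exact by_contra fun hpx => hcon x hpx hx
  refine ((hx.const_mul (p x)⁻¹).sub (hq.mul_const (f x))).congr (.of_forall fun y => ?_)
  simp only [Pi.sub_apply]
  field_simp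
  ring

theorem integrable_mul_fst_of_integrable_prod (hp : Integrable p μ) (hq : ∫ y, q y ∂ν ≠ 0)
    (h : Integrable (fun z : X × Y => p z.1 * q z.2 * (f z.1 + g z.2)) (μ.prod ν)) :
    Integrable (fun x => p x * f x) μ := by
  refine integrable_mul_snd_of_integrable_prod (f := g) hq hp
    (h.swap.congr (.of_forall fun z => ?_))
  simp only [Function.comp_apply, Prod.fst_swap, Prod.snd_swap]
  ring

theorem integral_prod_mul_add (hp : Integrable p μ) (hp_one : ∫ x, p x ∂μ = 1)
    (hq : Integrable q ν) (hq_one : ∫ y, q y ∂ν = 1)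
    (h : Integrable (fun z : X × Y => p z.1 * q z.2 * (f z.1 + g z.2)) (μ.prod ν)) :
    ∫ z, p z.1 * q z.2 * (f z.1 + g z.2) ∂μ.prod ν = ∫ x, p x * f x ∂μ + ∫ y, q y * g y ∂ν := by
  have hpf := integrable_mul_fst_of_integrable_prod hp (hq_one.trans_ne one_ne_zero) h
  have hqg := integrable_mul_snd_of_integrable_prod (hp_one.trans_ne one_ne_zero) hq h
  calc ∫ z, p z.1 * q z.2 * (f z.1 + g z.2) ∂μ.prod ν
      = ∫ z, (p z.1 * f z.1 * q z.2 + p z.1 * (q z.2 * g z.2)) ∂μ.prod ν := by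
        congr with z
        ring
    _ = ∫ x, p x * f x ∂μ + ∫ y, q y * g y ∂ν := by
        rw [integral_add (hpf.mul_prod hq) (hp.mul_prod hqg),
          integral_prod_mul (fun x => p x * f x), integral_prod_mul p (fun y => q y * g y),
          hp_one, hq_one, mul_one, one_mul]

end ProductMeasure

section UnitBump

/-- A `C²` weight of total mass one supported inside the interval `(u, v)`. -/
structure IsUnitBump (u v : ℝ) (p : ℝ → ℝ) : Prop where
  contDiff : ContDiff ℝ 2 p
  hasCompactSupport : HasCompactSupport p
  tsupport_subset : tsupport p ⊆ Ioo u v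
  integral_eq_one : ∫ t, p t = 1

theorem exists_isUnitBump {u v : ℝ} (huv : u < v) : ∃ p, IsUnitBump u v p := by
  let bump : ContDiffBump ((u + v) / 2) :=
    ⟨(v - u) / 8, (v - u) / 4, by linarith, by linarith⟩
  refine ⟨bump.normed volume, bump.contDiff_normed, bump.hasCompactSupport_normed, ?_,
    bump.integral_normed⟩
  rw [bump.tsupport_normed_eq, Real.closedBall_eq_Icc]
  exact Icc_subset_Ioo (by dsimp only [bump]; linarith) (by dsimp only [bump]; linarith)

variable {u v : ℝ} {p : ℝ → ℝ}

theorem IsUnitBump.eq_zero (hp : IsUnitBump u v p) {t : ℝ} (ht : t ∉ Ioo u v) : p t = 0 :=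
  by_contra fun hne => ht (hp.tsupport_subset (subset_tsupport p hne))

theorem IsUnitBump.integrable (hp : IsUnitBump u v p) : Integrable p :=
  hp.contDiff.continuous.integrable_of_hasCompactSupport hp.hasCompactSupport

end UnitBump

section ChartIntegrand

variable {R : ℝ × ℝ → ℝ} {p q : ℝ → ℝ} {M u v : ℝ}

/-- The chart cochain with `(a, b, d)` as normalized triple, as a function of a free vertex `s`
weighted by `p` and of the inserted vertex `moebius (insertion x₀ x₂ x₃) y` weighted by `q`. -/
noncomputable def chartIntegrand (R : ℝ × ℝ → ℝ) (p q : ℝ → ℝ) (x₀ x₂ x₃ a b d : ℝ)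
    (x : ℝ × ℝ) : ℝ :=
  p x.1 * q x.2 * chartCochain R
    (moebius (normalizer a b d) x.1, moebius (normalizer a b d * insertion x₀ x₂ x₃) x.2)

theorem integrable_chartIntegrand (hR : AEStronglyMeasurable R (volume.restrict P2))
    (hM : ∀ x ∈ P2, |R x| ≤ M) (hp : Integrable p) (hq : Integrable q) {x₀ x₂ x₃ a b d : ℝ}
    (h02 : x₀ < x₂) (h23 : x₂ < x₃) (hab : a < b) (hbd : b < d) :
    Integrable (chartIntegrand R p q x₀ x₂ x₃ a b d) := by
  have hN := det_normalizer_ne_zero hab hbd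
  refine integrable_mul_comp_moebius_prod hp hq (aestronglyMeasurable_chartCochain hR)
    (abs_chartCochain_le hM) hN ?_
  rw [Matrix.det_mul]
  exact mul_ne_zero hN (det_insertion_ne_zero h02 h23)

variable {P : Type*} [NormedAddCommGroup P] [NormedSpace ℝ P] {Ω : Set P} {n : WithTop ℕ∞}
  {x₀ x₂ x₃ a b d : P → ℝ}

theorem contDiffOn_normalizer (ha : ContDiffOn ℝ n a Ω) (hb : ContDiffOn ℝ n b Ω)
    (hd : ContDiffOn ℝ n d Ω) (i j : Fin 2) :
    ContDiffOn ℝ n (fun θ => normalizer (a θ) (b θ) (d θ) i j) Ω := by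
  fin_cases i <;> fin_cases j <;> dsimp [normalizer] <;> fun_prop

theorem contDiffOn_insertion (h₀ : ContDiffOn ℝ n x₀ Ω) (h₂ : ContDiffOn ℝ n x₂ Ω)
    (h₃ : ContDiffOn ℝ n x₃ Ω) (i j : Fin 2) :
    ContDiffOn ℝ n (fun θ => insertion (x₀ θ) (x₂ θ) (x₃ θ) i j) Ω := by
  fin_cases i <;> fin_cases j <;> dsimp [insertion] <;> fun_prop

theorem contDiffOn_integral_chartIntegrand [LocallyCompactSpace P]
    (hR : AEStronglyMeasurable R (volume.restrict P2)) (hM : ∀ x ∈ P2, |R x| ≤ M)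
    (hp : IsUnitBump u v p) (hq : IsUnitBump 0 1 q) (hΩ : IsOpen Ω)
    (h₀ : ContDiffOn ℝ 2 x₀ Ω) (h₂ : ContDiffOn ℝ 2 x₂ Ω) (h₃ : ContDiffOn ℝ 2 x₃ Ω)
    (ha : ContDiffOn ℝ 2 a Ω) (hb : ContDiffOn ℝ 2 b Ω) (hd : ContDiffOn ℝ 2 d Ω)
    (h02 : ∀ θ ∈ Ω, x₀ θ < x₂ θ) (h23 : ∀ θ ∈ Ω, x₂ θ < x₃ θ) (hab : ∀ θ ∈ Ω, a θ < b θ)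
    (hbd : ∀ θ ∈ Ω, b θ < d θ) (ha2 : ∀ θ ∈ Ω, a θ < x₂ θ) (hau : ∀ θ ∈ Ω, a θ < u) :
    ContDiffOn ℝ 2
      (fun θ => ∫ x, chartIntegrand R p q (x₀ θ) (x₂ θ) (x₃ θ) (a θ) (b θ) (d θ) x) Ω := by
  have hN := contDiffOn_normalizer ha hb hd
  have hI := contDiffOn_insertion h₀ h₂ h₃
  have det_N : ∀ θ ∈ Ω, (normalizer (a θ) (b θ) (d θ)).det ≠ 0 := fun θ hθ =>
    det_normalizer_ne_zero (hab θ hθ) (hbd θ hθ)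
  refine contDiffOn_integral_mul_comp_moebius_prod (n := 2) hp.contDiff hp.hasCompactSupport
    hq.contDiff hq.hasCompactSupport (aestronglyMeasurable_chartCochain hR)
    (abs_chartCochain_le hM) hΩ hN
    (B := fun θ => normalizer (a θ) (b θ) (d θ) * insertion (x₀ θ) (x₂ θ) (x₃ θ))
    (fun i j => ?_) det_N (fun θ hθ => ?_) (fun θ hθ s hs => ?_) (fun θ hθ y hy => ?_)
  · simp only [Matrix.mul_apply, Fin.sum_univ_two]
    exact ((hN i 0).mul (hI 0 j)).add ((hN i 1).mul (hI 1 j))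
  · rw [Matrix.det_mul]
    exact mul_ne_zero (det_N θ hθ) (det_insertion_ne_zero (h02 θ hθ) (h23 θ hθ))
  · rw [moebiusDenom_normalizer]
    exact mul_ne_zero (by linarith [hau θ hθ, (hp.tsupport_subset hs).1])
      (by linarith [hbd θ hθ])
  · have hy := hq.tsupport_subset hy
    have hden := (moebiusDenom_insertion_pos (h02 θ hθ) (h23 θ hθ) hy.1).ne'
    rw [moebiusDenom_mul hden, moebiusDenom_normalizer]
    have hmem := moebius_insertion_mem_Ioo (h02 θ hθ) (h23 θ hθ) hy
    exact mul_ne_zero (mul_ne_zero (by linarith [ha2 θ hθ, hmem.1]) (by linarith [hbd θ hθ])) hden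

end ChartIntegrand

section VertexAverage

variable {R : ℝ × ℝ → ℝ} {p q : ℝ → ℝ} {M u v s y x₀ x₁ x₂ x₃ x₄ : ℝ}

/-- The average over `y`, with weight `q`, of `R` along the ray through `(c, 1)`. Up to sign this
is the rough part of the averaged cochain. -/
noncomputable def rayAverage (R : ℝ × ℝ → ℝ) (q : ℝ → ℝ) (c : ℝ) : ℝ :=
  ∫ y, q y * R (c * y, y)

/-- The four-point cochain obtained from `fivePoint R` by averaging the last vertex. -/
noncomputable def vertexAverage (R : ℝ × ℝ → ℝ) (p : ℝ → ℝ) (x₀ x₁ x₂ x₃ : ℝ) : ℝ :=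
  ∫ s, p s * fivePoint R x₀ x₁ x₂ x₃ s

/-- The regular part of `vertexAverage`: the average of the faces of `(x₀, x₁, x₂, t, x₃, s)` that
contain both of the averaged vertices `t` and `s`. -/
noncomputable def regularPart (R : ℝ × ℝ → ℝ) (p q : ℝ → ℝ) (x₀ x₁ x₂ x₃ : ℝ) : ℝ :=
  (∫ x, chartIntegrand R p q x₀ x₂ x₃ x₁ x₂ x₃ x) -
    (∫ x, chartIntegrand R p q x₀ x₂ x₃ x₀ x₂ x₃ x) +
    (∫ x, chartIntegrand R p q x₀ x₂ x₃ x₀ x₁ x₃ x) +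
    ∫ x, chartIntegrand R p q x₀ x₂ x₃ x₀ x₁ x₂ x

theorem contDiffOn_regularPart {P : Type*} [NormedAddCommGroup P] [NormedSpace ℝ P]
    [LocallyCompactSpace P] {Ω : Set P} {x₀ x₁ x₂ x₃ : P → ℝ}
    (hR : AEStronglyMeasurable R (volume.restrict P2)) (hM : ∀ x ∈ P2, |R x| ≤ M)
    (hp : IsUnitBump u v p) (hq : IsUnitBump 0 1 q) (hΩ : IsOpen Ω)
    (h₀ : ContDiffOn ℝ 2 x₀ Ω) (h₁ : ContDiffOn ℝ 2 x₁ Ω) (h₂ : ContDiffOn ℝ 2 x₂ Ω)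
    (h₃ : ContDiffOn ℝ 2 x₃ Ω) (h01 : ∀ θ ∈ Ω, x₀ θ < x₁ θ) (h12 : ∀ θ ∈ Ω, x₁ θ < x₂ θ)
    (h23 : ∀ θ ∈ Ω, x₂ θ < x₃ θ) (h3u : ∀ θ ∈ Ω, x₃ θ < u) :
    ContDiffOn ℝ 2 (fun θ => regularPart R p q (x₀ θ) (x₁ θ) (x₂ θ) (x₃ θ)) Ω := by
  have h02 : ∀ θ ∈ Ω, x₀ θ < x₂ θ := fun θ hθ => (h01 θ hθ).trans (h12 θ hθ)
  have h13 : ∀ θ ∈ Ω, x₁ θ < x₃ θ := fun θ hθ => (h12 θ hθ).trans (h23 θ hθ)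
  have h1u : ∀ θ ∈ Ω, x₁ θ < u := fun θ hθ => (h13 θ hθ).trans (h3u θ hθ)
  have h0u : ∀ θ ∈ Ω, x₀ θ < u := fun θ hθ => (h01 θ hθ).trans (h1u θ hθ)
  have smooth {a b d : P → ℝ} (ha : ContDiffOn ℝ 2 a Ω) (hb : ContDiffOn ℝ 2 b Ω)
      (hd : ContDiffOn ℝ 2 d Ω) :=
    contDiffOn_integral_chartIntegrand hR hM hp hq hΩ h₀ h₂ h₃ ha hb hd h02 h23
  exact (((smooth h₁ h₂ h₃ h12 h23 h12 h1u).sub (smooth h₀ h₂ h₃ h02 h23 h02 h0u)).add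
    (smooth h₀ h₁ h₃ h01 h13 h02 h0u)).add (smooth h₀ h₁ h₂ h01 h12 h02 h0u)

theorem chartCochain_insertion_lt (R : ℝ × ℝ → ℝ) {a b : ℝ} (h02 : x₀ < x₂) (h23 : x₂ < x₃)
    (hab : a < b) (hb : b ≤ x₂) (h3s : x₃ < s) (hy : y ∈ Ioo (0 : ℝ) 1) :
    chartCochain R (moebius (normalizer a b x₃) s,
        moebius (normalizer a b x₃ * insertion x₀ x₂ x₃) y) =
      fivePoint R a b (moebius (insertion x₀ x₂ x₃) y) x₃ s := by
  obtain ⟨ht2, ht3⟩ := moebius_insertion_mem_Ioo h02 h23 hy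
  rw [moebius_mul (moebiusDenom_insertion_pos h02 h23 hy.1).ne',
    chartCochain_moebius_normalizer R hab (hb.trans_lt h23) (hb.trans_lt ht2) ht3.ne h3s
      (ht3.trans h3s), min_eq_right ht3.le, max_eq_left ht3.le]

theorem chartCochain_insertion_gt (R : ℝ × ℝ → ℝ) {a b : ℝ} (h02 : x₀ < x₂) (h23 : x₂ < x₃)
    (hab : a < b) (hb : b < x₂) (h3s : x₃ < s) (hy : y ∈ Ioo (0 : ℝ) 1) :
    chartCochain R (moebius (normalizer a b x₂) s,
        moebius (normalizer a b x₂ * insertion x₀ x₂ x₃) y) =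
      fivePoint R a b x₂ (moebius (insertion x₀ x₂ x₃) y) s := by
  obtain ⟨ht2, ht3⟩ := moebius_insertion_mem_Ioo h02 h23 hy
  rw [moebius_mul (moebiusDenom_insertion_pos h02 h23 hy.1).ne',
    chartCochain_moebius_normalizer R hab hb (hb.trans ht2) ht2.ne' (h23.trans h3s)
      (ht3.trans h3s), min_eq_left ht2.le, max_eq_right ht2.le]

/-- The cocycle identity of `(x₀, x₁, x₂, t, x₃, s)`, where `t` is the vertex inserted at `y`: the
face without `t` does not depend on `y`, and the face without `s` does not depend on `s`. -/
theorem IsSixTerm.mul_fivePoint_add_ray (h6 : IsSixTerm R) (hp : IsUnitBump u v p)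
    (hq : IsUnitBump 0 1 q) (h01 : x₀ < x₁) (h12 : x₁ < x₂) (h23 : x₂ < x₃) (h3u : x₃ < u)
    (x : ℝ × ℝ) :
    p x.1 * q x.2 * (fivePoint R x₀ x₁ x₂ x₃ x.1 + R (crossRatio x₀ x₁ x₂ x₃ * x.2, x.2)) =
      chartIntegrand R p q x₀ x₂ x₃ x₁ x₂ x₃ x - chartIntegrand R p q x₀ x₂ x₃ x₀ x₂ x₃ x +
        chartIntegrand R p q x₀ x₂ x₃ x₀ x₁ x₃ x + chartIntegrand R p q x₀ x₂ x₃ x₀ x₁ x₂ x := by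
  by_cases hx : x.1 ∈ Ioo u v ∧ x.2 ∈ Ioo (0 : ℝ) 1
  · obtain ⟨hs, hy⟩ := hx
    have h3s := h3u.trans hs.1
    have h02 := h01.trans h12
    obtain ⟨ht2, ht3⟩ := moebius_insertion_mem_Ioo h02 h23 hy
    have cocycle := h6.fivePoint_cocycle h01 h12 ht2 ht3 h3s
    simp only [chartIntegrand]
    rw [chartCochain_insertion_lt R h02 h23 h12 le_rfl h3s hy,
      chartCochain_insertion_lt R h02 h23 h02 le_rfl h3s hy,
      chartCochain_insertion_lt R h02 h23 h01 h12.le h3s hy,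
      chartCochain_insertion_gt R h02 h23 h01 h12 h3s hy,
      ← fivePoint_moebius_insertion R h01 h12 h23 hy]
    linear_combination (-(p x.1 * q x.2)) * cocycle
  · have hzero : p x.1 * q x.2 = 0 := by
      rcases not_and_or.1 hx with hs | hy
      · rw [hp.eq_zero hs, zero_mul]
      · rw [hq.eq_zero hy, mul_zero]
    simp only [chartIntegrand, hzero, zero_mul, sub_zero, add_zero]

theorem IsSixTerm.integrable_mul_fivePoint_and_vertexAverage_eq (h6 : IsSixTerm R)
    (hR : AEStronglyMeasurable R (volume.restrict P2)) (hM : ∀ x ∈ P2, |R x| ≤ M)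
    (hp : IsUnitBump u v p) (hq : IsUnitBump 0 1 q) (h01 : x₀ < x₁) (h12 : x₁ < x₂)
    (h23 : x₂ < x₃) (h3u : x₃ < u) :
    Integrable (fun s => p s * fivePoint R x₀ x₁ x₂ x₃ s) ∧
      vertexAverage R p x₀ x₁ x₂ x₃ =
        regularPart R p q x₀ x₁ x₂ x₃ - rayAverage R q (crossRatio x₀ x₁ x₂ x₃) := by
  have h02 := h01.trans h12
  have integrable_chart {a b d : ℝ} (hab : a < b) (hbd : b < d) :=
    integrable_chartIntegrand hR hM hp.integrable hq.integrable h02 h23 hab hbd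
  have i₀ := integrable_chart h12 h23
  have i₁ := integrable_chart h02 h23
  have i₂ := integrable_chart h01 (h12.trans h23)
  have i₃ := integrable_chart h01 h12
  have pointwise := h6.mul_fivePoint_add_ray hp hq h01 h12 h23 h3u
  have integrable_sum := (((i₀.sub i₁).add i₂).add i₃).congr
    (.of_forall fun x => (pointwise x).symm)
  rw [Measure.volume_eq_prod] at integrable_sum
  refine ⟨integrable_mul_fst_of_integrable_prod (q := q)
    (g := fun y => R (crossRatio x₀ x₁ x₂ x₃ * y, y)) hp.integrable
    (hq.integral_eq_one.trans_ne one_ne_zero) integrable_sum, eq_sub_of_add_eq ?_⟩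
  calc vertexAverage R p x₀ x₁ x₂ x₃ + rayAverage R q (crossRatio x₀ x₁ x₂ x₃)
      = ∫ x : ℝ × ℝ, p x.1 * q x.2 *
          (fivePoint R x₀ x₁ x₂ x₃ x.1 + R (crossRatio x₀ x₁ x₂ x₃ * x.2, x.2)) :=
        (integral_prod_mul_add (f := fivePoint R x₀ x₁ x₂ x₃)
          (g := fun y => R (crossRatio x₀ x₁ x₂ x₃ * y, y)) hp.integrable hp.integral_eq_one
          hq.integrable hq.integral_eq_one integrable_sum).symm
    _ = regularPart R p q x₀ x₁ x₂ x₃ := by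
        simp only [pointwise]
        rw [integral_add ?_ i₃, integral_add ?_ i₂, integral_sub i₀ i₁, regularPart] <;> fun_prop

theorem IsSixTerm.fivePoint_eq_vertexAverage (h6 : IsSixTerm R) (hp : IsUnitBump u v p)
    (h_int : ∀ {x₀ x₁ x₂ x₃ : ℝ}, x₀ < x₁ → x₁ < x₂ → x₂ < x₃ → x₃ < u →
      Integrable fun s => p s * fivePoint R x₀ x₁ x₂ x₃ s)
    (h01 : x₀ < x₁) (h12 : x₁ < x₂) (h23 : x₂ < x₃) (h34 : x₃ < x₄) (h4u : x₄ < u) :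
    fivePoint R x₀ x₁ x₂ x₃ x₄ =
      vertexAverage R p x₁ x₂ x₃ x₄ - vertexAverage R p x₀ x₂ x₃ x₄
        + vertexAverage R p x₀ x₁ x₃ x₄ - vertexAverage R p x₀ x₁ x₂ x₄
        + vertexAverage R p x₀ x₁ x₂ x₃ := by
  have i₀ := h_int h12 h23 h34 h4u
  have i₁ := h_int (h01.trans h12) h23 h34 h4u
  have i₂ := h_int h01 (h12.trans h23) h34 h4u
  have i₃ := h_int h01 h12 (h23.trans h34) h4u
  have i₄ := h_int h01 h12 h23 (h34.trans h4u)
  calc fivePoint R x₀ x₁ x₂ x₃ x₄ = ∫ s, p s * fivePoint R x₀ x₁ x₂ x₃ x₄ := by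
        rw [integral_mul_const, hp.integral_eq_one, one_mul]
    _ = ∫ s, (p s * fivePoint R x₁ x₂ x₃ x₄ s - p s * fivePoint R x₀ x₂ x₃ x₄ s
          + p s * fivePoint R x₀ x₁ x₃ x₄ s - p s * fivePoint R x₀ x₁ x₂ x₄ s
          + p s * fivePoint R x₀ x₁ x₂ x₃ s) := by
        congr with s
        by_cases hs : s ∈ Ioo u v
        · have cocycle := h6.fivePoint_cocycle h01 h12 h23 h34 (h4u.trans hs.1)
          linear_combination (-p s) * cocycle
        · simp only [hp.eq_zero hs, zero_mul, sub_zero, add_zero]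
    _ = _ := by
        rw [integral_add ?_ i₄, integral_sub ?_ i₃, integral_add ?_ i₂, integral_sub i₀ i₁]
        · rfl
        all_goals fun_prop

end VertexAverage

section Regularization

variable {R : ℝ × ℝ → ℝ} {p q : ℝ → ℝ} {M u v x y x₀ x₁ x₂ x₃ x₄ : ℝ}

theorem IsSixTerm.fivePoint_sub_spenceAbel_neg_rayAverage (h6 : IsSixTerm R)
    (hR : AEStronglyMeasurable R (volume.restrict P2)) (hM : ∀ x ∈ P2, |R x| ≤ M)
    (hp : IsUnitBump u v p) (hq : IsUnitBump 0 1 q) (h01 : x₀ < x₁) (h12 : x₁ < x₂)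
    (h23 : x₂ < x₃) (h34 : x₃ < x₄) (h4u : x₄ < u) :
    fivePoint R x₀ x₁ x₂ x₃ x₄ -
        spenceAbel (fun c => -rayAverage R q c) (crossRatio x₀ x₁ x₃ x₄, crossRatio x₀ x₂ x₃ x₄) =
      regularPart R p q x₁ x₂ x₃ x₄ - regularPart R p q x₀ x₂ x₃ x₄
        + regularPart R p q x₀ x₁ x₃ x₄ - regularPart R p q x₀ x₁ x₂ x₄
        + regularPart R p q x₀ x₁ x₂ x₃ := by
  have average {y₀ y₁ y₂ y₃ : ℝ} (h01 : y₀ < y₁) (h12 : y₁ < y₂) (h23 : y₂ < y₃) (h3u : y₃ < u) :=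
    h6.integrable_mul_fivePoint_and_vertexAverage_eq hR hM hp hq h01 h12 h23 h3u
  rw [h6.fivePoint_eq_vertexAverage hp (fun h01 h12 h23 h3u => (average h01 h12 h23 h3u).1)
      h01 h12 h23 h34 h4u,
    (average h12 h23 h34 h4u).2, (average (h01.trans h12) h23 h34 h4u).2,
    (average h01 (h12.trans h23) h34 h4u).2, (average h01 h12 (h23.trans h34) h4u).2,
    (average h01 h12 h23 (h34.trans h4u)).2, spenceAbel_crossRatio _ h01 h12 h23 h34]
  ring

theorem mul_mem_P2 (hx : x ∈ Ioo (0 : ℝ) 1) (hy : y ∈ Ioo (0 : ℝ) 1) : (x * y, y) ∈ P2 :=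
  ⟨mul_pos hx.1 hy.1, mul_lt_of_lt_one_left hy.1 hx.2, hy.2⟩

theorem quasiMeasurePreserving_mul_prodMk :
    Measure.QuasiMeasurePreserving (fun x : ℝ × ℝ => (x.1 * x.2, x.2))
      (volume.restrict (Ioo (0 : ℝ) 1 ×ˢ Ioo (0 : ℝ) 1)) (volume.restrict P2) := by
  refine quasiMeasurePreserving_of_differentiableOn_leftInverse volume
    (Φ := fun x => (x.1 / x.2, x.2)) (by fun_prop) (fun x hx => mul_mem_P2 hx.1 hx.2) ?_ ?_
  · intro x hx
    have hne : x.2 ≠ 0 := (hx.1.trans hx.2.1).ne'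
    exact DifferentiableAt.differentiableWithinAt (by fun_prop (disch := assumption))
  · intro x hx
    simp only [mul_div_cancel_right₀ x.1 hx.2.1.ne']

theorem aemeasurable_rayAverage (hR : AEStronglyMeasurable R (volume.restrict P2))
    (hq : IsUnitBump 0 1 q) : AEMeasurable (rayAverage R q) (volume.restrict (Ioo 0 1)) := by
  have hmeas : AEStronglyMeasurable (fun x : ℝ × ℝ => q x.2 * R (x.1 * x.2, x.2))
      ((volume.restrict (Ioo 0 1)).prod (volume.restrict (Ioo 0 1))) := by
    rw [Measure.prod_restrict]
    exact (hq.contDiff.continuous.comp continuous_snd).aestronglyMeasurable.mul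
      (hR.comp_quasiMeasurePreserving quasiMeasurePreserving_mul_prodMk)
  have hset : rayAverage R q = fun c => ∫ y in Ioo (0 : ℝ) 1, q y * R (c * y, y) := by
    ext c
    rw [rayAverage, setIntegral_eq_integral_of_forall_compl_eq_zero]
    intro y hy
    rw [hq.eq_zero hy, zero_mul]
  rw [hset]
  exact hmeas.integral_prod_right'.aemeasurable

theorem abs_rayAverage_le (hM : ∀ p ∈ P2, |R p| ≤ M) (hq : IsUnitBump 0 1 q)
    (hx : x ∈ Ioo (0 : ℝ) 1) : |rayAverage R q x| ≤ ∫ y, |q y| * M := by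
  rw [← Real.norm_eq_abs, rayAverage]
  refine norm_integral_le_of_norm_le (hq.integrable.norm.mul_const M) (.of_forall fun y => ?_)
  rw [norm_mul]
  by_cases hy : y ∈ Ioo (0 : ℝ) 1
  · exact mul_le_mul_of_nonneg_left (hM _ (mul_mem_P2 hx hy)) (norm_nonneg _)
  · simp [hq.eq_zero hy]

theorem div_one_add_mem_Ioo (hx : x ∈ Ioo (0 : ℝ) 1) : x / (1 + x) ∈ Ioo (0 : ℝ) (1 / 2) := by
  have hpos : 0 < 1 + x := by linarith [hx.1]
  exact ⟨div_pos hx.1 hpos, by rw [div_lt_div_iff₀ hpos two_pos]; linarith [hx.2]⟩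

theorem div_one_add_lt_div_one_add (hx : 0 < x) (hxy : x < y) : x / (1 + x) < y / (1 + y) := by
  rw [div_lt_div_iff₀ (by linarith) (by linarith)]
  linarith

theorem crossRatio_div_one_add (hx : 0 < x) : crossRatio 0 (x / (1 + x)) (1 / 2) 1 = x := by
  have hne : 1 + x ≠ 0 := by linarith
  rw [crossRatio, one_sub_div hne]
  field_simp
  norm_num

/-- The tuple `(0, x / (1 + x), y / (1 + y), 1 / 2, 1)` has cross ratios `x` and `y`, and it stays
to the left of the support of `p`. -/
theorem IsSixTerm.contDiffOn_sub_spenceAbel_neg_rayAverage (h6 : IsSixTerm R)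
    (hR : AEStronglyMeasurable R (volume.restrict P2)) (hM : ∀ x ∈ P2, |R x| ≤ M)
    (hp : IsUnitBump u v p) (hq : IsUnitBump 0 1 q) (hu : 1 < u) :
    ContDiffOn ℝ 2 (fun z => R z - spenceAbel (fun c => -rayAverage R q c) z) P2 := by
  have hx₁ : ContDiffOn ℝ 2 (fun z : ℝ × ℝ => z.1 / (1 + z.1)) P2 :=
    contDiffOn_fst.div (contDiffOn_const.add contDiffOn_fst) fun z hz => by linarith [hz.1]
  have hx₂ : ContDiffOn ℝ 2 (fun z : ℝ × ℝ => z.2 / (1 + z.2)) P2 :=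
    contDiffOn_snd.div (contDiffOn_const.add contDiffOn_snd) fun z hz => by linarith [hz.1, hz.2.1]
  have hconst (c : ℝ) : ContDiffOn ℝ 2 (fun _ : ℝ × ℝ => c) P2 := contDiffOn_const
  have h01 : ∀ z ∈ P2, 0 < z.1 / (1 + z.1) := fun z hz =>
    (div_one_add_mem_Ioo ⟨hz.1, hz.2.1.trans hz.2.2⟩).1
  have h12 : ∀ z ∈ P2, z.1 / (1 + z.1) < z.2 / (1 + z.2) := fun z hz =>
    div_one_add_lt_div_one_add hz.1 hz.2.1
  have h23 : ∀ z ∈ P2, z.2 / (1 + z.2) < 1 / 2 := fun z hz =>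
    (div_one_add_mem_Ioo ⟨hz.1.trans hz.2.1, hz.2.2⟩).2
  have h02 : ∀ z ∈ P2, 0 < z.2 / (1 + z.2) := fun z hz => (h01 z hz).trans (h12 z hz)
  have h13 : ∀ z ∈ P2, z.1 / (1 + z.1) < 1 / 2 := fun z hz => (h12 z hz).trans (h23 z hz)
  have h24 : ∀ z ∈ P2, z.2 / (1 + z.2) < 1 := fun z hz => (h23 z hz).trans one_half_lt_one
  have h34 : ∀ z ∈ P2, (1 / 2 : ℝ) < 1 := fun _ _ => one_half_lt_one
  have h3u : ∀ z ∈ P2, 1 / 2 < u := fun _ _ => one_half_lt_one.trans hu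
  have h4u : ∀ z ∈ P2, 1 < u := fun _ _ => hu
  have smooth {x₀ x₁ x₂ x₃ : ℝ × ℝ → ℝ} (h₀ : ContDiffOn ℝ 2 x₀ P2) (h₁ : ContDiffOn ℝ 2 x₁ P2)
      (h₂ : ContDiffOn ℝ 2 x₂ P2) (h₃ : ContDiffOn ℝ 2 x₃ P2) :=
    contDiffOn_regularPart hR hM hp hq isOpen_P2 h₀ h₁ h₂ h₃
  refine ContDiffOn.congr
    (((((smooth hx₁ hx₂ (hconst (1 / 2)) (hconst 1) h12 h23 h34 h4u).sub
      (smooth (hconst 0) hx₂ (hconst (1 / 2)) (hconst 1) h02 h23 h34 h4u)).add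
      (smooth (hconst 0) hx₁ (hconst (1 / 2)) (hconst 1) h01 h13 h34 h4u)).sub
      (smooth (hconst 0) hx₁ hx₂ (hconst 1) h01 h12 h24 h4u)).add
      (smooth (hconst 0) hx₁ hx₂ (hconst (1 / 2)) h01 h12 h23 h3u)) fun z hz => ?_
  have key := h6.fivePoint_sub_spenceAbel_neg_rayAverage hR hM hp hq (h01 z hz) (h12 z hz)
    (h23 z hz) one_half_lt_one hu
  rwa [fivePoint, crossRatio_div_one_add hz.1, crossRatio_div_one_add (hz.1.trans hz.2.1)] at key

theorem exists_contDiffOn_sub_spenceAbel (hR : AEStronglyMeasurable R (volume.restrict P2))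
    (hM : ∀ p ∈ P2, |R p| ≤ M) (h6 : IsSixTerm R) :
    ∃ L : ℝ → ℝ, AEMeasurable L (volume.restrict (Ioo 0 1)) ∧
      (∃ B, ∀ x ∈ Ioo (0 : ℝ) 1, |L x| ≤ B) ∧
      ContDiffOn ℝ 2 (fun p => R p - spenceAbel L p) P2 := by
  obtain ⟨p, hp⟩ := exists_isUnitBump (u := 2) (v := 3) (by norm_num)
  obtain ⟨q, hq⟩ := exists_isUnitBump zero_lt_one
  exact ⟨fun x => -rayAverage R q x, (aemeasurable_rayAverage hR hq).neg,
    ⟨∫ y, |q y| * M, fun x hx => (abs_neg _).trans_le (abs_rayAverage_le hM hq hx)⟩,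
    h6.contDiffOn_sub_spenceAbel_neg_rayAverage hR hM hp hq one_lt_two⟩

end Regularization

/-! ### Boundedness and existence -/

section Bound

variable {L : ℝ → ℝ} {B M C x : ℝ}

theorem one_div_two_sub_mem_P2 (hx : 0 < x) (hx1 : x < 1) : (x, 1 / (2 - x)) ∈ P2 := by
  have h2x : 0 < 2 - x := by linarith
  exact ⟨hx, by rw [lt_div_iff₀ h2x]; nlinarith [sq_pos_of_pos (sub_pos.2 hx1)],
    by rw [div_lt_one h2x]; linarith⟩

/-- The choice `y = 1 / (2 - x)` makes `oddsRatio x y = x`. -/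
theorem spenceAbel_one_div_two_sub (L : ℝ → ℝ) (hx : x < 1) :
    spenceAbel L (x, 1 / (2 - x)) =
      L ((1 - x) / (2 - x)) - L (1 / (2 - x)) + 2 * L x - L (x * (2 - x)) := by
  have h1x : 1 - x ≠ 0 := by linarith
  have h2x : 2 - x ≠ 0 := by linarith
  have complement : (1 / (2 - x) - x) / (1 - x) = (1 - x) / (2 - x) := by
    field_simp
    ring
  have odds : oddsRatio x (1 / (2 - x)) = x := by
    rw [oddsRatio, one_sub_div h2x, show 2 - x - 1 = 1 - x by ring]
    field_simp
  rw [spenceAbel, complement, odds, div_div_eq_mul_div, div_one]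
  ring

theorem two_mul_abs_le_of_abs_spenceAbel_le (hM : ∀ p ∈ P2, |spenceAbel L p| ≤ M)
    (hB : ∀ x ∈ Icc (1 / 3 : ℝ) (3 / 4), |L x| ≤ B) (hx : 0 < x) (hx2 : x ≤ 1 / 2) :
    2 * |L x| ≤ |L (x * (2 - x))| + 2 * B + M := by
  have h2x : 0 < 2 - x := by linarith
  have bound_spence := hM _ (one_div_two_sub_mem_P2 hx (by linarith))
  rw [spenceAbel_one_div_two_sub L (by linarith)] at bound_spence
  have bound_left := hB ((1 - x) / (2 - x))
    ⟨by rw [div_le_div_iff₀ three_pos h2x]; linarith,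
      by rw [div_le_div_iff₀ h2x four_pos]; linarith⟩
  have bound_right := hB (1 / (2 - x))
    ⟨by rw [div_le_div_iff₀ three_pos h2x]; linarith,
      by rw [div_le_div_iff₀ h2x four_pos]; linarith⟩
  rw [abs_le] at bound_spence bound_left bound_right
  rw [← le_div_iff₀' two_pos, abs_le]
  constructor <;> linarith [le_abs_self (L (x * (2 - x))), neg_abs_le (L (x * (2 - x)))]

/-- The map `x ↦ x * (2 - x)` increases `x ≤ 1 / 2` by a factor of at least `3 / 2` and at most up
to `3 / 4`, so its orbits reach `[1 / 2, 3 / 4]` in finitely many steps. -/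
theorem abs_le_of_abs_spenceAbel_le (hM : ∀ p ∈ P2, |spenceAbel L p| ≤ M)
    (hB : ∀ x ∈ Icc (1 / 3 : ℝ) (3 / 4), |L x| ≤ B) (hx : x ∈ Ioc (0 : ℝ) (3 / 4)) :
    |L x| ≤ 2 * B + M := by
  have hM0 : 0 ≤ M := (abs_nonneg _).trans
    (hM _ (one_div_two_sub_mem_P2 (x := 1 / 2) (by norm_num) (by norm_num)))
  have hB0 : 0 ≤ B := (abs_nonneg _).trans (hB (1 / 2) (by norm_num))
  have bound_of_pow_le (n : ℕ) : ∀ x, (2 / 3 : ℝ) ^ n / 2 ≤ x → x ≤ 3 / 4 → |L x| ≤ 2 * B + M := by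
    induction n with
    | zero =>
      intro x hx hx1
      have := hB x ⟨by linarith, hx1⟩
      linarith
    | succ n ih =>
      intro x hx hx1
      have hpow : (0 : ℝ) < (2 / 3) ^ n := by positivity
      rw [pow_succ] at hx
      rcases le_total (1 / 2) x with hx2 | hx2
      · have := hB x ⟨by linarith, hx1⟩
        linarith
      · have hdouble := two_mul_abs_le_of_abs_spenceAbel_le hM hB (by linarith) hx2
        have := ih (x * (2 - x)) (by nlinarith) (by nlinarith)
        linarith
  obtain ⟨n, hn⟩ := exists_pow_lt_of_lt_one hx.1 (by norm_num : (2 / 3 : ℝ) < 1)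
  have hpow : (0 : ℝ) < (2 / 3) ^ n := by positivity
  exact bound_of_pow_le n x (by linarith) hx.2

theorem exists_abs_le_of_abs_spenceAbel_le (hM : ∀ p ∈ P2, |spenceAbel L p| ≤ M)
    (hB : ∀ x ∈ Icc (1 / 3 : ℝ) (3 / 4), |L x| ≤ B)
    (hrefl : ∀ x ∈ Ioo (0 : ℝ) 1, L (1 - x) = C - L x) :
    ∃ N, ∀ x ∈ Ioo (0 : ℝ) 1, |L x| ≤ N := by
  refine ⟨|C| + (2 * B + M), fun x hx => ?_⟩
  rcases le_total x (3 / 4) with hx' | hx'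
  · linarith [abs_le_of_abs_spenceAbel_le hM hB ⟨hx.1, hx'⟩, abs_nonneg C]
  · calc |L x| = |C - L (1 - x)| := by rw [hrefl x hx, sub_sub_cancel]
      _ ≤ |C| + |L (1 - x)| := abs_sub _ _
      _ ≤ |C| + (2 * B + M) := by
        gcongr
        exact abs_le_of_abs_spenceAbel_le hM hB ⟨by linarith [hx.2], by linarith⟩

end Bound

section Existence

variable {R : ℝ × ℝ → ℝ} {L : ℝ → ℝ} {M k t x y z : ℝ}

theorem sub_one_div_sub_one (a b : ℝ) : (a - 1) / (b - 1) = (1 - a) / (1 - b) := by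
  rw [← neg_sub 1 a, ← neg_sub 1 b, neg_div_neg_eq]

theorem mul_sub_one_div_eq_oddsRatio (x y : ℝ) :
    x * (y - 1) / (y * (x - 1)) = oddsRatio x y := by
  rw [oddsRatio, ← neg_sub 1 y, ← neg_sub 1 x, mul_neg, mul_neg, neg_div_neg_eq]

theorem sub_one_div_sub_one_eq_one_sub (hx : x ≠ 1) :
    (y - 1) / (x - 1) = 1 - (y - x) / (1 - x) := by
  rw [sub_one_div_sub_one, one_sub_div (sub_ne_zero.2 hx.symm), sub_sub_sub_cancel_right]

theorem rotate_sub_div_one_sub (hx : x ≠ 1) :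
    rotate ((y - x) / (1 - x), (z - x) / (1 - x)) =
      ((z - 1) / (x - 1), (z - 1) / (y - 1)) := by
  have hx' : x - 1 ≠ 0 := sub_ne_zero.2 hx
  simp only [rotate]
  rw [← sub_one_div_sub_one_eq_one_sub hx, ← sub_one_div_sub_one_eq_one_sub hx,
    div_div_div_cancel_right₀ hx']

theorem isSixTerm_of_rotate_eq (hrot : ∀ p ∈ P2, R (rotate p) = R p)
    (h6 : ∀ x y z : ℝ, 0 < x → x < y → y < z → z < 1 →
      R (x, y) - R (x, z) + R (y, z)
        - R (x / z, y / z) - R ((z - 1) / (x - 1), (z - 1) / (y - 1))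
        + R (x * (z - 1) / (z * (x - 1)), y * (z - 1) / (z * (y - 1))) = 0) : IsSixTerm R := by
  intro x y z hx hxy hyz hz
  have hy1 : y < 1 := hyz.trans hz
  rw [← hrot _ (sub_div_one_sub_mem_P2 hxy hyz hz),
    rotate_sub_div_one_sub (hxy.trans hy1).ne, ← mul_sub_one_div_eq_oddsRatio,
    ← mul_sub_one_div_eq_oddsRatio]
  exact h6 x y z hx hxy hyz hz

theorem fiveTerm_eq_spenceAbel_sub_of_reflection {C : ℝ}
    (hrefl : ∀ x ∈ Ioo (0 : ℝ) 1, L (1 - x) = C - L x) (hxy : x < y) (hy : y < 1) :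
    L x - L y - L (x / y) - L ((y - 1) / (x - 1)) + L (x * (y - 1) / (y * (x - 1))) =
      spenceAbel L (x, y) - C := by
  rw [sub_one_div_sub_one_eq_one_sub (hxy.trans hy).ne, mul_sub_one_div_eq_oddsRatio,
    hrefl _ (sub_div_one_sub_mem_Ioo hxy hy), spenceAbel]
  ring

/-- A constant `c` has reflection constant `2 * c` but `spenceAbel` value `c`, whereas the Rogers
dilogarithm is odd under reflection, so the two constants can be prescribed independently. -/
theorem exists_add_rogersDilog_reflection (hL : ∀ p ∈ P2, R p = spenceAbel L p + t)
    (hk : ∀ x ∈ Ioo (0 : ℝ) 1, L x + L (1 - x) = k) (C : ℝ) :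
    ∃ a c : ℝ, (∀ p ∈ P2, spenceAbel (fun x => L x + (a * rogersDilog x + c)) p = R p + C) ∧
      ∀ x ∈ Ioo (0 : ℝ) 1, L (1 - x) + (a * rogersDilog (1 - x) + c) =
        C - (L x + (a * rogersDilog x + c)) := by
  obtain ⟨K, hK0, hK⟩ := exists_spenceAbel_rogersDilog_eq_ne_zero
  refine ⟨(t + (C + k) / 2) / K, (C - k) / 2, fun p hp => ?_, fun x hx => ?_⟩
  · have hcancel : (t + (C + k) / 2) / K * spenceAbel rogersDilog p = t + (C + k) / 2 := by
      rw [hK p hp, div_mul_cancel₀ _ hK0]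
    have hLp := hL p hp
    simp only [spenceAbel] at hcancel hLp ⊢
    linear_combination hcancel - hLp
  · rw [rogersDilog_one_sub]
    linear_combination hk x hx

theorem exists_eq_spenceAbel_add_const (hR : AEMeasurable R (volume.restrict P2))
    (hM : ∀ p ∈ P2, |R p| ≤ M) (h6 : IsSixTerm R) (hrot : ∀ p ∈ P2, R (rotate p) = R p) :
    ∃ (L₁ L₂ : ℝ → ℝ) (k t B : ℝ), AEMeasurable L₁ (volume.restrict (Ioo 0 1)) ∧
      (∀ x ∈ Ioo (0 : ℝ) 1, |L₁ x| ≤ B) ∧ ContinuousOn L₂ (Ioo 0 1) ∧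
      (∀ p ∈ P2, R p = spenceAbel (fun x => L₁ x + L₂ x) p + t) ∧
      ∀ x ∈ Ioo (0 : ℝ) 1, L₁ x + L₂ x + (L₁ (1 - x) + L₂ (1 - x)) = k := by
  obtain ⟨L₁, hL₁, ⟨B, hB⟩, hsmooth⟩ :=
    exists_contDiffOn_sub_spenceAbel hR.aestronglyMeasurable hM h6
  obtain ⟨L₂, θ, hL₂, hθ⟩ :=
    exists_eq_spenceAbel_add_oddsRatio hsmooth (h6.sub (isSixTerm_spenceAbel L₁))
  have hsum : ∀ p ∈ P2, R p = spenceAbel (fun x => L₁ x + L₂ x) p + θ (oddsRatio p.1 p.2) := by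
    intro p hp
    have := hθ p hp
    simp only [spenceAbel] at this ⊢
    linear_combination this
  obtain ⟨k, t, hk, ht⟩ := exists_const_of_rotate_eq hrot hsum
  refine ⟨L₁, L₂, k, t, B, hL₁, hB, fun x hx => (hL₂ x hx).continuousAt.continuousWithinAt,
    fun p hp => ?_, hk⟩
  rw [hsum p hp, ht _ (oddsRatio_mem_Ioo hp.1 hp.2.1 hp.2.2)]

theorem exists_bounded_spenceAbel_eq_add_const (hR : AEMeasurable R (volume.restrict P2))
    (hM : ∀ p ∈ P2, |R p| ≤ M) (h6 : IsSixTerm R) (hrot : ∀ p ∈ P2, R (rotate p) = R p) (C : ℝ) :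
    ∃ L : ℝ → ℝ, AEMeasurable L (volume.restrict (Ioo 0 1)) ∧
      (∃ N, ∀ x ∈ Ioo (0 : ℝ) 1, |L x| ≤ N) ∧ (∀ p ∈ P2, spenceAbel L p = R p + C) ∧
      ∀ x ∈ Ioo (0 : ℝ) 1, L (1 - x) = C - L x := by
  obtain ⟨L₁, L₂, k, t, B₁, hL₁, hB₁, hL₂, hRL, hk⟩ := exists_eq_spenceAbel_add_const hR hM h6 hrot
  obtain ⟨a, c, hspence, hrefl⟩ := exists_add_rogersDilog_reflection hRL hk C
  have hcont : ContinuousOn (fun x => L₂ x + (a * rogersDilog x + c)) (Ioo 0 1) :=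
    hL₂.add ((continuousOn_const.mul fun x hx =>
      (differentiableAt_rogersDilog hx).continuousAt.continuousWithinAt).add continuousOn_const)
  simp only [add_assoc] at hspence hrefl
  have hsub : Icc (1 / 3 : ℝ) (3 / 4) ⊆ Ioo 0 1 := Icc_subset_Ioo (by norm_num) (by norm_num)
  obtain ⟨B₂, hB₂⟩ := isCompact_Icc.exists_bound_of_continuousOn (hcont.mono hsub)
  have bound_spence : ∀ p ∈ P2,
      |spenceAbel (fun x => L₁ x + (L₂ x + (a * rogersDilog x + c))) p| ≤ M + |C| := fun p hp => by
    rw [hspence p hp]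
    exact (abs_add_le _ _).trans (add_le_add_left (hM p hp) _)
  exact ⟨_, hL₁.add (hcont.aemeasurable measurableSet_Ioo),
    exists_abs_le_of_abs_spenceAbel_le bound_spence
      (fun x hx => (abs_add_le _ _).trans (add_le_add (hB₁ x (hsub hx)) (hB₂ x hx))) hrefl,
    hspence, hrefl⟩

end Existence

end SpenceAbel

/-- **Pointwise existence for bounded data.** If `R` is a bounded Lebesgue measurable function
on `P₂` satisfying the 6-term equation everywhere on `P₃` and the symmetry equation everywhere
on `P₂`, then for every `C ∈ ℝ` there is a bounded Lebesgue measurable `L` on `(0,1)` solving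
the perturbed Spence–Abel system with data `(R, C)` pointwise. -/
theorem perturbed_spence_abel_pointwise_existence (R : ℝ × ℝ → ℝ)
    (hRmeas : AEMeasurable R (volume.restrict P2))
    (hRbdd : ∃ M : ℝ, ∀ p ∈ P2, |R p| ≤ M)
    (h6 : ∀ x y z : ℝ, 0 < x → x < y → y < z → z < 1 →
      R (x, y) - R (x, z) + R (y, z)
        - R (x / z, y / z) - R ((z - 1) / (x - 1), (z - 1) / (y - 1))
        + R (x * (z - 1) / (z * (x - 1)), y * (z - 1) / (z * (y - 1))) = 0)
    (hsym : ∀ x y : ℝ, 0 < x → x < y → y < 1 →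
      R (1 - y, (1 - y) / (1 - x)) = R (x, y))
    (C : ℝ) :
    ∃ L : ℝ → ℝ, AEMeasurable L (volume.restrict (Set.Ioo (0:ℝ) 1)) ∧
      (∃ M : ℝ, ∀ x ∈ Set.Ioo (0:ℝ) 1, |L x| ≤ M) ∧
      (∀ x y : ℝ, 0 < x → x < y → y < 1 →
        L x - L y - L (x / y) - L ((y - 1) / (x - 1))
          + L (x * (y - 1) / (y * (x - 1))) = R (x, y)) ∧
      (∀ x ∈ Set.Ioo (0:ℝ) 1, L (1 - x) = C - L x) := by
  obtain ⟨M, hM⟩ := hRbdd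
  have hrot : ∀ p ∈ P2, R (SpenceAbel.rotate p) = R p := fun p hp =>
    hsym p.1 p.2 hp.1 hp.2.1 hp.2.2
  obtain ⟨L, hLmeas, hLbdd, hL, hrefl⟩ :=
    SpenceAbel.exists_bounded_spenceAbel_eq_add_const hRmeas hM
      (SpenceAbel.isSixTerm_of_rotate_eq hrot h6) hrot C
  refine ⟨L, hLmeas, hLbdd, fun x y hx hxy hy => ?_, hrefl⟩
  rw [SpenceAbel.fiveTerm_eq_spenceAbel_sub_of_reflection hrefl hxy hy, hL (x, y) ⟨hx, hxy, hy⟩,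
    add_sub_cancel_right]
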